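/- Fix T > 0 and S₀ > 0, and let κ, κ̄ and the payoff data be as defined. For λ ∈ [0,1] put α(λ; z, t) := (1 − κ(λ,1)·∫_t^T z·e^{κ(λ,z)(u−T)}·e^{½σ²z(z−1)(T−u)} du)·e^{κ(λ,z)(T−t)}, w(λ) := ∫_ℝ S₀^{z_y}·α(λ; z_y, 0)·p(z_y) dy, c := ∫_ℝ S₀^{z_y}·e^{½σ²z_y(z_y−1)T}·p(z_y) dy, h(λ; t, y, z) := κ̄(λ;y,z)α(λ;y,t)α(λ;z,t) − κ̄(λ;y,1)α(λ;y,t)·z·e^{½σ²z(z−1)(T−t)} − κ̄(λ;z,1)α(λ;z,t)·y·e^{½σ²y(y−1)(T−t)} + κ̄(λ;1,1)·yz·e^{½σ²(z(z−1)+y(y−1))(T−t)}, J₂(λ; t, y, z) := S₀^{y+z}·e^{κ(λ,y+z)t}·h(λ; t, y, z), and ε²(λ) := (w(λ) − c)² + ∫_ℝ∫_ℝ∫₀ᵀ J₂(λ; t, z_u, z_v)·p(z_u)p(z_v) dt du dv. Then λ ↦ ε²(λ) is twice continuously differentiable on [0,1], ε²(0) = 0, (ε²)'(0) = 0, and ½·(ε²)''(0)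 = ¼σ⁴(s₄ − s₃²)·∫₀ᵀ∫_ℝ D₂(t, S₀e^{μt+x})² dγ_{σ²t}(x) dt + (1/36)·s₃²·σ⁶·A(0,S₀)² + s₃²·∫₀ᵀ∫_ℝ (½σ²·D₂(t, S₀e^{μt+x}) + ⅙σ⁴·B(t, S₀e^{μt+x}))² dγ_{σ²t}(x) dt, where s₃ := (∫x³K(dx))/σ³, s₄ := (∫x⁴K(dx))/σ⁴, and: if μ + ½σ² = 0 then A(t,s) := (T−t)(D₃(t,s) + 3D₂(t,s)) and B(t,s) := (T−t)(D₄(t,s) + 6D₃(t,s) + 6D₂(t,s)); if μ + ½σ² ≠ 0 then A(t,s) := (Ã(t, s·e^{(μ+½σ²)(T−t)}) − Ã(t,s))/(μ+½σ²) and B(t,s) := (B̃(t, s·e^{(μ+½σ²)(T−t)}) − B̃(t,s))/(μ+½σ²), with Ã(t,s) := D₂(t,s) + D₁(t,s) − D₀(t,s) and B̃(t,s) := D₃(t,s) + 3D₂(t,s). -/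

import Mathlib

open MeasureTheory ProbabilityTheory Complex Set
open scoped Classical

/-- Cumulant generating function `κ(λ, z)` of the interpolating family. -/
noncomputable def kappa (μ c : ℝ) (K : Measure ℝ) (lam : ℝ) (z : ℂ) : ℂ :=
  if lam = 0 then (μ : ℂ) * z + (((c + ∫ x : ℝ, x ^ 2 ∂K) : ℝ) : ℂ) / 2 * z ^ 2
  else (μ : ℂ) * z + (c : ℂ) / 2 * z ^ 2 +
    ((lam : ℂ) ^ 2)⁻¹ *
      ∫ x : ℝ, (Complex.exp ((lam : ℂ) * z * (x : ℂ)) - 1 - (lam : ℂ) * z * (x : ℂ)) ∂K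

noncomputable def kbar (μ c : ℝ) (K : Measure ℝ) (lam : ℝ) (y z : ℂ) : ℂ :=
  kappa μ c K lam (y + z) - kappa μ c K lam y - kappa μ c K lam z

noncomputable def gamLK (μ c : ℝ) (K : Measure ℝ) (lam : ℝ) (z : ℂ) : ℂ :=
  kbar μ c K lam z 1 / kbar μ c K lam 1 1

noncomputable def etaLK (μ c : ℝ) (K : Measure ℝ) (lam : ℝ) (z : ℂ) : ℂ :=
  kappa μ c K lam z - kappa μ c K lam 1 * gamLK μ c K lam z

noncomputable def cpowR (s : ℝ) (z : ℂ) : ℂ := Complex.exp (z * Real.log s)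

noncomputable def zLine (R y : ℝ) : ℂ := (R : ℂ) + (y : ℂ) * Complex.I

/-- Fourier transform `l̂(y) = ∫ l(x) e^{-ixy} dx`. -/
noncomputable def lhat (l : ℝ → ℝ) (y : ℝ) : ℂ :=
  ∫ x : ℝ, (l x : ℂ) * Complex.exp (-(Complex.I * (x : ℂ) * (y : ℂ)))

noncomputable def pCoef (l : ℝ → ℝ) (y : ℝ) : ℂ := lhat l y / (2 * (Real.pi : ℂ))

/-- Black-Scholes cash greek `D_n(t,s)` in integral form (with `C = D_0`). -/
noncomputable def cashGreek (σ2 T R : ℝ) (l : ℝ → ℝ) (n : ℕ) (t s : ℝ) : ℂ :=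
  ∫ y : ℝ, (∏ k ∈ Finset.range n, (zLine R y - (k : ℂ))) * cpowR s (zLine R y) *
    Complex.exp (((σ2 : ℂ) / 2) * zLine R y * (zLine R y - 1) * ((T : ℂ) - (t : ℂ))) * pCoef l y

/-- The auxiliary function `Ã(t,s) = D₂ + D₁ − D₀`. -/
noncomputable def Atil (σ2 T R : ℝ) (l : ℝ → ℝ) (t s : ℝ) : ℂ :=
  cashGreek σ2 T R l 2 t s + cashGreek σ2 T R l 1 t s - cashGreek σ2 T R l 0 t s

/-- The auxiliary function `B̃(t,s) = D₃ + 3D₂`. -/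
noncomputable def Btil (σ2 T R : ℝ) (l : ℝ → ℝ) (t s : ℝ) : ℂ :=
  cashGreek σ2 T R l 3 t s + 3 * cashGreek σ2 T R l 2 t s

/-- The function `A(t,s)` from Theorem `errBSapprox`. -/
noncomputable def Afun (μ σ2 T R : ℝ) (l : ℝ → ℝ) (t s : ℝ) : ℂ :=
  if μ + σ2 / 2 = 0 then
    (((T - t : ℝ)) : ℂ) * (cashGreek σ2 T R l 3 t s + 3 * cashGreek σ2 T R l 2 t s)
  else
    (Atil σ2 T R l t (s * Real.exp ((μ + σ2 / 2) * (T - t))) - Atil σ2 T R l t s) /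
      (((μ + σ2 / 2 : ℝ)) : ℂ)

/-- The function `B(t,s)` from Theorem `errBSapprox`. -/
noncomputable def Bfun (μ σ2 T R : ℝ) (l : ℝ → ℝ) (t s : ℝ) : ℂ :=
  if μ + σ2 / 2 = 0 then
    (((T - t : ℝ)) : ℂ) * (cashGreek σ2 T R l 4 t s + 6 * cashGreek σ2 T R l 3 t s +
      6 * cashGreek σ2 T R l 2 t s)
  else
    (Btil σ2 T R l t (s * Real.exp ((μ + σ2 / 2) * (T - t))) - Btil σ2 T R l t s) /
      (((μ + σ2 / 2 : ℝ)) : ℂ)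

/-!
By Taylor's formula `κ(λ, z) = μ z + z² ∫ e^{λ z x} ν(dx)`, where the finite measure `ν` has every
exponential moment that `x² K(dx)` has; hence `κ` is smooth across `λ = 0`. Families whose
two-jet in `λ` grows polynomially along the line `re z = R` are closed under products, under
exponentials with real part bounded above, and under integration against the rapidly decreasing
payoff coefficients, so `ε²` is `C²` and may be differentiated under the integral sign.

At `λ = 0` the model is Gaussian: the hedge is perfect, `h` and its first derivative vanish, and its
second derivative is a quadratic form in the symbols of the greeks `D₂` and `½σ² D₂ + ⅙σ⁴ B`. Since
`S₀^{y+z} e^{κ(0,y+z) t}` is the expectation of `S_t^y S_t^z` for lognormal `S_t`, integrating this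
form yields the expected squares of those greeks. Both cases in the definition of `A` and `B` are
means over `s ∈ [0, 1]` of `e^{θ s}`, with `θ = (μ + σ²/2) (T - t) z`.
-/

/-! ### Functions of polynomial growth -/

section PolyGrowth

variable {Ω Ω' X : Type*} [MeasurableSpace Ω] [MeasurableSpace Ω'] [MeasurableSpace X]

/-- Measurable functions growing on `A` at most polynomially in a weight `ρ`. The weight is at least
`1` on `A`, so that exponents can be raised. -/
structure HasPolyGrowth (A : Set Ω) (ρ : Ω → ℝ) (f : Ω → ℂ) : Prop where
  measurable : Measurable f
  one_le_weight : ∀ w ∈ A, 1 ≤ ρ w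
  exists_isBigO : ∃ N : ℕ, f =O[Filter.principal A] fun w => ρ w ^ N

namespace HasPolyGrowth

variable {A : Set Ω} {ρ : Ω → ℝ} {f g : Ω → ℂ}

theorem of_norm_le (hf : Measurable f) (hρ : ∀ w ∈ A, 1 ≤ ρ w) (C : ℝ) (N : ℕ)
    (hC : ∀ w ∈ A, ‖f w‖ ≤ C * ρ w ^ N) : HasPolyGrowth A ρ f where
  measurable := hf
  one_le_weight := hρ
  exists_isBigO := ⟨N, .of_bound C <| Filter.eventually_principal.2 fun w hw => by
    rw [Real.norm_of_nonneg (pow_nonneg (zero_le_one.trans (hρ w hw)) N)]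
    exact hC w hw⟩

theorem exists_norm_le (hf : HasPolyGrowth A ρ f) :
    ∃ C : ℝ, 0 ≤ C ∧ ∃ N : ℕ, ∀ w ∈ A, ‖f w‖ ≤ C * ρ w ^ N := by
  obtain ⟨N, hN⟩ := hf.exists_isBigO
  obtain ⟨C, hC, hb⟩ := hN.exists_nonneg
  refine ⟨C, hC, N, fun w hw => ?_⟩
  have := Filter.eventually_principal.1 hb.bound w hw
  rwa [Real.norm_of_nonneg (pow_nonneg (zero_le_one.trans (hf.one_le_weight w hw)) N)] at this

theorem exists_isBigO_of_le (hf : HasPolyGrowth A ρ f) :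
    ∃ N : ℕ, ∀ M ≥ N, f =O[Filter.principal A] fun w => ρ w ^ M := by
  obtain ⟨N, hN⟩ := hf.exists_isBigO
  refine ⟨N, fun M hM => hN.trans (.of_bound 1 <| Filter.eventually_principal.2 fun w hw => ?_)⟩
  have h1 := hf.one_le_weight w hw
  have h0 := zero_le_one.trans h1
  rw [Real.norm_of_nonneg (pow_nonneg h0 N), Real.norm_of_nonneg (pow_nonneg h0 M), one_mul]
  exact pow_le_pow_right₀ h1 hM

theorem const (hρ : ∀ w ∈ A, 1 ≤ ρ w) (z : ℂ) : HasPolyGrowth A ρ fun _ => z :=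
  of_norm_le measurable_const hρ ‖z‖ 0 (by simp)

theorem add (hf : HasPolyGrowth A ρ f) (hg : HasPolyGrowth A ρ g) :
    HasPolyGrowth A ρ fun w => f w + g w := by
  obtain ⟨N, hN⟩ := hf.exists_isBigO_of_le
  obtain ⟨M, hM⟩ := hg.exists_isBigO_of_le
  exact ⟨hf.measurable.add hg.measurable, hf.one_le_weight, max N M,
    (hN _ (le_max_left _ _)).add (hM _ (le_max_right _ _))⟩

theorem mul (hf : HasPolyGrowth A ρ f) (hg : HasPolyGrowth A ρ g) :
    HasPolyGrowth A ρ fun w => f w * g w := by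
  obtain ⟨N, hN⟩ := hf.exists_isBigO
  obtain ⟨M, hM⟩ := hg.exists_isBigO
  refine ⟨hf.measurable.mul hg.measurable, hf.one_le_weight, N + M, ?_⟩
  simpa only [pow_add] using hN.mul hM

theorem const_mul (z : ℂ) (hf : HasPolyGrowth A ρ f) : HasPolyGrowth A ρ fun w => z * f w :=
  (const hf.one_le_weight z).mul hf

theorem sub (hf : HasPolyGrowth A ρ f) (hg : HasPolyGrowth A ρ g) :
    HasPolyGrowth A ρ fun w => f w - g w := by
  simpa [sub_eq_add_neg] using hf.add (hg.const_mul (-1))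

theorem exp (hf : Measurable f) (hρ : ∀ w ∈ A, 1 ≤ ρ w) {B : ℝ} (hB : ∀ w ∈ A, (f w).re ≤ B) :
    HasPolyGrowth A ρ fun w => Complex.exp (f w) :=
  of_norm_le hf.cexp hρ (Real.exp B) 0 fun w hw => by
    simpa [Complex.norm_exp] using hB w hw

theorem comp {A' : Set Ω'} {ρ' : Ω' → ℝ} (hf : HasPolyGrowth A ρ f) {φ : Ω' → Ω}
    (hφ : Measurable φ) (hA : MapsTo φ A' A) (hρ : ∀ w ∈ A', ρ (φ w) ≤ ρ' w) :
    HasPolyGrowth A' ρ' fun w => f (φ w) := by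
  obtain ⟨C, hC, N, hb⟩ := hf.exists_norm_le
  have h1 : ∀ w ∈ A', 1 ≤ ρ (φ w) := fun w hw => hf.one_le_weight _ (hA hw)
  refine of_norm_le (hf.measurable.comp hφ) (fun w hw => (h1 w hw).trans (hρ w hw)) C N
    fun w hw => (hb _ (hA hw)).trans ?_
  have := pow_le_pow_left₀ (zero_le_one.trans (h1 w hw)) (hρ w hw) N
  gcongr

theorem pow (hf : HasPolyGrowth A ρ f) (n : ℕ) : HasPolyGrowth A ρ fun w => f w ^ n := by
  induction n with
  | zero => simpa using const hf.one_le_weight 1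
  | succ n ih => simpa only [pow_succ] using ih.mul hf

theorem prod {ι : Type*} {F : ι → Ω → ℂ} {s : Finset ι} (hρ : ∀ w ∈ A, 1 ≤ ρ w)
    (hF : ∀ i ∈ s, HasPolyGrowth A ρ (F i)) : HasPolyGrowth A ρ fun w => ∏ i ∈ s, F i w := by
  induction s using Finset.cons_induction with
  | empty => simpa using const hρ 1
  | cons i s hi ih =>
    simp only [Finset.prod_cons]
    exact (hF i (Finset.mem_cons_self i s)).mul
      (ih fun j hj => hF j (Finset.mem_cons_of_mem hj))

theorem integrable_mul {m : Measure Ω} {q : Ω → ℂ} (hf : HasPolyGrowth A ρ f)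
    (hA : ∀ᵐ w ∂m, w ∈ A) (hq : Measurable q)
    (hr : ∀ N : ℕ, Integrable (fun w => ρ w ^ N * ‖q w‖) m) :
    Integrable (fun w => f w * q w) m := by
  obtain ⟨C, -, N, hb⟩ := hf.exists_norm_le
  refine ((hr N).const_mul C).mono' (hf.measurable.mul hq).aestronglyMeasurable ?_
  filter_upwards [hA] with w hw
  rw [norm_mul, ← mul_assoc]
  exact mul_le_mul_of_nonneg_right (hb w hw) (norm_nonneg _)

variable {m : Measure X} {q : X → ℂ} {r : X → ℝ} {A₂ : Set (Ω × X)} {ρ₂ : Ω × X → ℝ}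

theorem exists_norm_mul_le {S : Set Ω'} {F : Ω' × (Ω × X) → ℂ}
    (hF : HasPolyGrowth (S ×ˢ A₂) (fun x => ρ₂ x.2) F)
    (hA : ∀ w ∈ A, ∀ᵐ x ∂m, (w, x) ∈ A₂ ∧ ρ₂ (w, x) ≤ ρ w * r x) :
    ∃ C : ℝ, 0 ≤ C ∧ ∃ N : ℕ, ∀ w ∈ A, ∀ᵐ x ∂m, ∀ l ∈ S,
      ‖F (l, (w, x)) * q x‖ ≤ C * ρ w ^ N * (r x ^ N * ‖q x‖) := by
  obtain ⟨C, hC, N, hb⟩ := hF.exists_norm_le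
  refine ⟨C, hC, N, fun w hw => ?_⟩
  filter_upwards [hA w hw] with x hx l hl
  have hρ₂ : 0 ≤ ρ₂ (w, x) := zero_le_one.trans (hF.one_le_weight (l, (w, x)) ⟨hl, hx.1⟩)
  calc ‖F (l, (w, x)) * q x‖ ≤ C * ρ₂ (w, x) ^ N * ‖q x‖ := by
        rw [norm_mul]; gcongr; exact hb (l, (w, x)) ⟨hl, hx.1⟩
    _ ≤ C * (ρ w * r x) ^ N * ‖q x‖ := by gcongr; exact hx.2
    _ = C * ρ w ^ N * (r x ^ N * ‖q x‖) := by rw [mul_pow]; ring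

theorem integral [SFinite m] {S : Set Ω'} {F : Ω' × (Ω × X) → ℂ}
    (hF : HasPolyGrowth (S ×ˢ A₂) (fun x => ρ₂ x.2) F) (hq : Measurable q)
    (hρ : ∀ w ∈ A, 1 ≤ ρ w)
    (hA : ∀ w ∈ A, ∀ᵐ x ∂m, (w, x) ∈ A₂ ∧ ρ₂ (w, x) ≤ ρ w * r x)
    (hr : ∀ N : ℕ, Integrable (fun x => r x ^ N * ‖q x‖) m) :
    HasPolyGrowth (S ×ˢ A) (fun x => ρ x.2) fun y => ∫ x, F (y.1, (y.2, x)) * q x ∂m := by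
  obtain ⟨C, hC, N, hb⟩ := exists_norm_mul_le (q := q) hF hA
  refine of_norm_le ?_ (fun y hy => hρ _ hy.2) (C * |∫ x, r x ^ N * ‖q x‖ ∂m|) N ?_
  · have : Measurable fun z : (Ω' × Ω) × X => F (z.1.1, (z.1.2, z.2)) * q z.2 :=
      (hF.measurable.comp (by fun_prop)).mul (hq.comp measurable_snd)
    exact this.stronglyMeasurable.integral_prod_right'.measurable
  · rintro ⟨l, w⟩ ⟨hl, hw⟩
    have hw1 := zero_le_one.trans (hρ w hw)
    calc ‖∫ x, F (l, (w, x)) * q x ∂m‖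
        ≤ ∫ x, C * ρ w ^ N * (r x ^ N * ‖q x‖) ∂m :=
          norm_integral_le_of_norm_le ((hr N).const_mul _) <| by
            filter_upwards [hb w hw] with x hx using hx l hl
      _ = C * ρ w ^ N * ∫ x, r x ^ N * ‖q x‖ ∂m := integral_const_mul _ _
      _ ≤ C * ρ w ^ N * |∫ x, r x ^ N * ‖q x‖ ∂m| := by gcongr; exact le_abs_self _
      _ = C * |∫ x, r x ^ N * ‖q x‖ ∂m| * ρ w ^ N := by ring

theorem hasDerivAt_integral {U : Set ℝ} {F F' : ℝ × (Ω × X) → ℂ}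
    (hF : HasPolyGrowth (U ×ˢ A₂) (fun x => ρ₂ x.2) F)
    (hF' : HasPolyGrowth (U ×ˢ A₂) (fun x => ρ₂ x.2) F') (hU : IsOpen U) (hq : Measurable q)
    (hA : ∀ w ∈ A, ∀ᵐ x ∂m, (w, x) ∈ A₂ ∧ ρ₂ (w, x) ≤ ρ w * r x)
    (hr : ∀ N : ℕ, Integrable (fun x => r x ^ N * ‖q x‖) m)
    (hd : ∀ l ∈ U, ∀ y ∈ A₂, HasDerivAt (fun k => F (k, y)) (F' (l, y)) l)
    {l : ℝ} (hl : l ∈ U) {w : Ω} (hw : w ∈ A) :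
    HasDerivAt (fun k => ∫ x, F (k, (w, x)) * q x ∂m) (∫ x, F' (l, (w, x)) * q x ∂m) l := by
  obtain ⟨C, -, N, hb⟩ := exists_norm_mul_le (q := q) hF hA
  obtain ⟨C', -, N', hb'⟩ := exists_norm_mul_le (q := q) hF' hA
  have hmeas : ∀ {G : ℝ × (Ω × X) → ℂ}, Measurable G → ∀ k,
      AEStronglyMeasurable (fun x => G (k, (w, x)) * q x) m := fun hG k =>
    ((hG.comp (by fun_prop)).mul hq).aestronglyMeasurable
  refine (hasDerivAt_integral_of_dominated_loc_of_deriv_le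
    (F := fun k x => F (k, (w, x)) * q x) (F' := fun k x => F' (k, (w, x)) * q x)
    (bound := fun x => C' * ρ w ^ N' * (r x ^ N' * ‖q x‖)) (hU.mem_nhds hl)
    (.of_forall (hmeas hF.measurable)) ?_ (hmeas hF'.measurable l) (hb' w hw)
    ((hr N').const_mul _) ?_).2
  · refine ((hr N).const_mul (C * ρ w ^ N)).mono' (hmeas hF.measurable l) ?_
    filter_upwards [hb w hw] with x hx using hx l hl
  · filter_upwards [hA w hw] with x hx k hk using (hd k hk _ hx.1).mul_const _

theorem continuousOn_integral {U : Set ℝ} {F : ℝ × (Ω × X) → ℂ}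
    (hF : HasPolyGrowth (U ×ˢ A₂) (fun x => ρ₂ x.2) F) (hq : Measurable q)
    (hA : ∀ w ∈ A, ∀ᵐ x ∂m, (w, x) ∈ A₂ ∧ ρ₂ (w, x) ≤ ρ w * r x)
    (hr : ∀ N : ℕ, Integrable (fun x => r x ^ N * ‖q x‖) m)
    (hc : ∀ y ∈ A₂, ContinuousOn (fun k => F (k, y)) U) {w : Ω} (hw : w ∈ A) :
    ContinuousOn (fun k => ∫ x, F (k, (w, x)) * q x ∂m) U := by
  obtain ⟨C, -, N, hb⟩ := exists_norm_mul_le (q := q) hF hA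
  refine continuousOn_of_dominated (bound := fun x => C * ρ w ^ N * (r x ^ N * ‖q x‖))
    (fun k _ => ((hF.measurable.comp (by fun_prop)).mul hq).aestronglyMeasurable) (fun k hk => ?_)
    ((hr N).const_mul _) ?_
  · filter_upwards [hb w hw] with x hx using hx k hk
  · filter_upwards [hA w hw] with x hx using (hc _ hx.1).mul continuousOn_const

end HasPolyGrowth

end PolyGrowth

/-! ### Two-jets in a real parameter -/

/-- A function of `(l, w) ∈ ℝ × Ω` with candidates for its first two derivatives in `l`. -/
structure TwoJet (Ω : Type*) where
  val : ℝ × Ω → ℂ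
  deriv : ℝ × Ω → ℂ
  deriv₂ : ℝ × Ω → ℂ

namespace TwoJet

variable {Ω Ω' X : Type*}

instance : Add (TwoJet Ω) :=
  ⟨fun F G => ⟨fun x => F.val x + G.val x, fun x => F.deriv x + G.deriv x,
    fun x => F.deriv₂ x + G.deriv₂ x⟩⟩

instance : Sub (TwoJet Ω) :=
  ⟨fun F G => ⟨fun x => F.val x - G.val x, fun x => F.deriv x - G.deriv x,
    fun x => F.deriv₂ x - G.deriv₂ x⟩⟩

instance : Mul (TwoJet Ω) :=
  ⟨fun F G => ⟨fun x => F.val x * G.val x, fun x => F.deriv x * G.val x + F.val x * G.deriv x,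
    fun x => (F.deriv₂ x * G.val x + F.deriv x * G.deriv x) +
      (F.deriv x * G.deriv x + F.val x * G.deriv₂ x)⟩⟩

/-- The jet of a function that does not depend on the parameter. -/
def const (f : Ω → ℂ) : TwoJet Ω := ⟨fun x => f x.2, fun _ => 0, fun _ => 0⟩

/-- The jet of the exponential of a function. -/
noncomputable def exp (F : TwoJet Ω) : TwoJet Ω where
  val x := Complex.exp (F.val x)
  deriv x := Complex.exp (F.val x) * F.deriv x
  deriv₂ x := Complex.exp (F.val x) * F.deriv x * F.deriv x + Complex.exp (F.val x) * F.deriv₂ x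

/-- The jet of a family of functions reindexed along `φ`. -/
def comap (φ : Ω' → Ω) (F : TwoJet Ω) : TwoJet Ω' where
  val x := F.val (x.1, φ x.2)
  deriv x := F.deriv (x.1, φ x.2)
  deriv₂ x := F.deriv₂ (x.1, φ x.2)

/-- The jet of the integral over the second variable against the complex density `q`. -/
noncomputable def integral [MeasurableSpace X] (m : Measure X) (q : X → ℂ) (F : TwoJet (Ω × X)) :
    TwoJet Ω where
  val y := ∫ x, F.val (y.1, (y.2, x)) * q x ∂m
  deriv y := ∫ x, F.deriv (y.1, (y.2, x)) * q x ∂m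
  deriv₂ y := ∫ x, F.deriv₂ (y.1, (y.2, x)) * q x ∂m

section Apply

variable (F G : TwoJet Ω) (x : ℝ × Ω)

@[simp] theorem val_add : (F + G).val x = F.val x + G.val x := rfl

@[simp] theorem deriv_add : (F + G).deriv x = F.deriv x + G.deriv x := rfl

@[simp] theorem deriv₂_add : (F + G).deriv₂ x = F.deriv₂ x + G.deriv₂ x := rfl

@[simp] theorem val_sub : (F - G).val x = F.val x - G.val x := rfl

@[simp] theorem deriv_sub : (F - G).deriv x = F.deriv x - G.deriv x := rfl

@[simp] theorem deriv₂_sub : (F - G).deriv₂ x = F.deriv₂ x - G.deriv₂ x := rfl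

@[simp] theorem val_mul : (F * G).val x = F.val x * G.val x := rfl

@[simp] theorem deriv_mul : (F * G).deriv x = F.deriv x * G.val x + F.val x * G.deriv x := rfl

@[simp] theorem deriv₂_mul : (F * G).deriv₂ x = (F.deriv₂ x * G.val x + F.deriv x * G.deriv x) +
    (F.deriv x * G.deriv x + F.val x * G.deriv₂ x) := rfl

end Apply

variable [MeasurableSpace Ω] [MeasurableSpace Ω'] [MeasurableSpace X]

/-- Jets whose components are indeed successive derivatives on `U`, the last one continuous, with
polynomial growth uniform over `U`. This is what differentiation under integrals preserves. -/
structure IsRegular (U : Set ℝ) (A : Set Ω) (ρ : Ω → ℝ) (F : TwoJet Ω) : Prop where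
  hasDerivAt : ∀ l ∈ U, ∀ w ∈ A, HasDerivAt (fun k => F.val (k, w)) (F.deriv (l, w)) l
  hasDerivAt_deriv : ∀ l ∈ U, ∀ w ∈ A, HasDerivAt (fun k => F.deriv (k, w)) (F.deriv₂ (l, w)) l
  continuousOn : ∀ w ∈ A, ContinuousOn (fun k => F.deriv₂ (k, w)) U
  val_growth : HasPolyGrowth (U ×ˢ A) (fun x => ρ x.2) F.val
  deriv_growth : HasPolyGrowth (U ×ˢ A) (fun x => ρ x.2) F.deriv
  deriv₂_growth : HasPolyGrowth (U ×ˢ A) (fun x => ρ x.2) F.deriv₂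

namespace IsRegular

variable {U : Set ℝ} {A : Set Ω} {ρ : Ω → ℝ} {F G : TwoJet Ω}

theorem continuousOn_val (hF : F.IsRegular U A ρ) {w : Ω} (hw : w ∈ A) :
    ContinuousOn (fun k => F.val (k, w)) U :=
  HasDerivAt.continuousOn fun l hl => hF.hasDerivAt l hl w hw

theorem continuousOn_deriv (hF : F.IsRegular U A ρ) {w : Ω} (hw : w ∈ A) :
    ContinuousOn (fun k => F.deriv (k, w)) U :=
  HasDerivAt.continuousOn fun l hl => hF.hasDerivAt_deriv l hl w hw

theorem const {f : Ω → ℂ} (hf : HasPolyGrowth A ρ f) : (TwoJet.const f).IsRegular U A ρ where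
  hasDerivAt l _ w _ := hasDerivAt_const l (f w)
  hasDerivAt_deriv l _ _ _ := hasDerivAt_const l 0
  continuousOn _ _ := continuousOn_const
  val_growth := hf.comp measurable_snd (fun _ hx => hx.2) fun _ _ => le_rfl
  deriv_growth := .const (fun _ hx => hf.one_le_weight _ hx.2) 0
  deriv₂_growth := .const (fun _ hx => hf.one_le_weight _ hx.2) 0

theorem add (hF : F.IsRegular U A ρ) (hG : G.IsRegular U A ρ) : (F + G).IsRegular U A ρ where
  hasDerivAt l hl w hw := (hF.hasDerivAt l hl w hw).add (hG.hasDerivAt l hl w hw)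
  hasDerivAt_deriv l hl w hw := (hF.hasDerivAt_deriv l hl w hw).add (hG.hasDerivAt_deriv l hl w hw)
  continuousOn w hw := (hF.continuousOn w hw).add (hG.continuousOn w hw)
  val_growth := hF.val_growth.add hG.val_growth
  deriv_growth := hF.deriv_growth.add hG.deriv_growth
  deriv₂_growth := hF.deriv₂_growth.add hG.deriv₂_growth

theorem sub (hF : F.IsRegular U A ρ) (hG : G.IsRegular U A ρ) : (F - G).IsRegular U A ρ where
  hasDerivAt l hl w hw := (hF.hasDerivAt l hl w hw).sub (hG.hasDerivAt l hl w hw)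
  hasDerivAt_deriv l hl w hw := (hF.hasDerivAt_deriv l hl w hw).sub (hG.hasDerivAt_deriv l hl w hw)
  continuousOn w hw := (hF.continuousOn w hw).sub (hG.continuousOn w hw)
  val_growth := hF.val_growth.sub hG.val_growth
  deriv_growth := hF.deriv_growth.sub hG.deriv_growth
  deriv₂_growth := hF.deriv₂_growth.sub hG.deriv₂_growth

theorem mul (hF : F.IsRegular U A ρ) (hG : G.IsRegular U A ρ) : (F * G).IsRegular U A ρ where
  hasDerivAt l hl w hw := (hF.hasDerivAt l hl w hw).mul (hG.hasDerivAt l hl w hw)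
  hasDerivAt_deriv l hl w hw :=
    ((hF.hasDerivAt_deriv l hl w hw).mul (hG.hasDerivAt l hl w hw)).add
      ((hF.hasDerivAt l hl w hw).mul (hG.hasDerivAt_deriv l hl w hw))
  continuousOn w hw :=
    (((hF.continuousOn w hw).mul (hG.continuousOn_val hw)).add
      ((hF.continuousOn_deriv hw).mul (hG.continuousOn_deriv hw))).add
    (((hF.continuousOn_deriv hw).mul (hG.continuousOn_deriv hw)).add
      ((hF.continuousOn_val hw).mul (hG.continuousOn w hw)))
  val_growth := hF.val_growth.mul hG.val_growth
  deriv_growth :=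
    (hF.deriv_growth.mul hG.val_growth).add (hF.val_growth.mul hG.deriv_growth)
  deriv₂_growth :=
    ((hF.deriv₂_growth.mul hG.val_growth).add (hF.deriv_growth.mul hG.deriv_growth)).add
      ((hF.deriv_growth.mul hG.deriv_growth).add (hF.val_growth.mul hG.deriv₂_growth))

theorem exp (hF : F.IsRegular U A ρ) {B : ℝ} (hB : ∀ l ∈ U, ∀ w ∈ A, (F.val (l, w)).re ≤ B) :
    F.exp.IsRegular U A ρ := by
  have hd : ∀ l ∈ U, ∀ w ∈ A, HasDerivAt (fun k => F.exp.val (k, w)) (F.exp.deriv (l, w)) l :=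
    fun l hl w hw => (hF.hasDerivAt l hl w hw).cexp
  have hexp : HasPolyGrowth (U ×ˢ A) (fun x => ρ x.2) F.exp.val :=
    .exp hF.val_growth.measurable hF.val_growth.one_le_weight fun x hx => hB x.1 hx.1 x.2 hx.2
  exact
    { hasDerivAt := hd
      hasDerivAt_deriv := fun l hl w hw => (hd l hl w hw).mul (hF.hasDerivAt_deriv l hl w hw)
      continuousOn := fun w hw =>
        have hexp := HasDerivAt.continuousOn fun l hl => hd l hl w hw
        ((hexp.mul (hF.continuousOn_deriv hw)).mul (hF.continuousOn_deriv hw)).add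
          (hexp.mul (hF.continuousOn w hw))
      val_growth := hexp
      deriv_growth := hexp.mul hF.deriv_growth
      deriv₂_growth :=
        ((hexp.mul hF.deriv_growth).mul hF.deriv_growth).add (hexp.mul hF.deriv₂_growth) }

theorem comap {A' : Set Ω'} {ρ' : Ω' → ℝ} (hF : F.IsRegular U A ρ) {φ : Ω' → Ω}
    (hφ : Measurable φ) (hA : MapsTo φ A' A) (hρ : ∀ w ∈ A', ρ (φ w) ≤ ρ' w) :
    (F.comap φ).IsRegular U A' ρ' where
  hasDerivAt l hl w hw := hF.hasDerivAt l hl _ (hA hw)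
  hasDerivAt_deriv l hl w hw := hF.hasDerivAt_deriv l hl _ (hA hw)
  continuousOn w hw := hF.continuousOn _ (hA hw)
  val_growth := hF.val_growth.comp (by fun_prop) (fun _ hx => ⟨hx.1, hA hx.2⟩) fun _ hx => hρ _ hx.2
  deriv_growth :=
    hF.deriv_growth.comp (by fun_prop) (fun _ hx => ⟨hx.1, hA hx.2⟩) fun _ hx => hρ _ hx.2
  deriv₂_growth :=
    hF.deriv₂_growth.comp (by fun_prop) (fun _ hx => ⟨hx.1, hA hx.2⟩) fun _ hx => hρ _ hx.2

theorem integral {m : Measure X} [SFinite m] {q : X → ℂ} {r : X → ℝ} {F : TwoJet (Ω × X)}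
    {A₂ : Set (Ω × X)} {ρ₂ : Ω × X → ℝ} (hF : F.IsRegular U A₂ ρ₂) (hU : IsOpen U)
    (hq : Measurable q) (hρ : ∀ w ∈ A, 1 ≤ ρ w)
    (hA : ∀ w ∈ A, ∀ᵐ x ∂m, (w, x) ∈ A₂ ∧ ρ₂ (w, x) ≤ ρ w * r x)
    (hr : ∀ N : ℕ, Integrable (fun x => r x ^ N * ‖q x‖) m) :
    (F.integral m q).IsRegular U A ρ where
  hasDerivAt _ hl _ hw :=
    hF.val_growth.hasDerivAt_integral hF.deriv_growth hU hq hA hr hF.hasDerivAt hl hw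
  hasDerivAt_deriv _ hl _ hw :=
    hF.deriv_growth.hasDerivAt_integral hF.deriv₂_growth hU hq hA hr hF.hasDerivAt_deriv hl hw
  continuousOn _ hw := hF.deriv₂_growth.continuousOn_integral hq hA hr hF.continuousOn hw
  val_growth := hF.val_growth.integral hq hρ hA hr
  deriv_growth := hF.deriv_growth.integral hq hρ hA hr
  deriv₂_growth := hF.deriv₂_growth.integral hq hρ hA hr

theorem deriv_eq (hF : F.IsRegular U A ρ) {w : Ω} (hw : w ∈ A) {l : ℝ} (hl : l ∈ U) :
    _root_.deriv (fun k => F.val (k, w)) l = F.deriv (l, w) :=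
  (hF.hasDerivAt l hl w hw).deriv

theorem iteratedDeriv_two_eq (hF : F.IsRegular U A ρ) (hU : IsOpen U) {w : Ω} (hw : w ∈ A) {l : ℝ}
    (hl : l ∈ U) : iteratedDeriv 2 (fun k => F.val (k, w)) l = F.deriv₂ (l, w) := by
  have : _root_.deriv (fun k => F.val (k, w)) =ᶠ[nhds l] fun k => F.deriv (k, w) := by
    filter_upwards [hU.mem_nhds hl] with k hk using hF.deriv_eq hw hk
  rw [iteratedDeriv_succ, iteratedDeriv_one, this.deriv_eq]
  exact (hF.hasDerivAt_deriv l hl w hw).deriv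

theorem contDiffOn (hF : F.IsRegular U A ρ) (hU : IsOpen U) {w : Ω} (hw : w ∈ A) :
    ContDiffOn ℝ 2 (fun k => F.val (k, w)) U := by
  have hderiv : ContDiffOn ℝ 1 (fun k => F.deriv (k, w)) U := by
    rw [show (1 : WithTop ℕ∞) = 0 + 1 by norm_num, contDiffOn_succ_iff_deriv_of_isOpen hU,
      contDiffOn_zero]
    exact ⟨fun l hl => (hF.hasDerivAt_deriv l hl w hw).differentiableAt.differentiableWithinAt,
      by simp, (hF.continuousOn w hw).congr fun l hl => (hF.hasDerivAt_deriv l hl w hw).deriv⟩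
  rw [show (2 : WithTop ℕ∞) = 1 + 1 by norm_num, contDiffOn_succ_iff_deriv_of_isOpen hU]
  exact ⟨fun l hl => (hF.hasDerivAt l hl w hw).differentiableAt.differentiableWithinAt,
    by simp, hderiv.congr fun l hl => hF.deriv_eq hw hl⟩

end IsRegular

end TwoJet

/-! ### The cumulant function as an exponential moment -/

/-- The measure `x² K(dx)`. -/
noncomputable def sqMeasure (K : Measure ℝ) : Measure ℝ :=
  K.withDensity fun x => ENNReal.ofReal (x ^ 2)

/-- The measure `(1 - s) ds` on `(0, 1]`, the weight in Taylor's integral remainder of order two. -/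
noncomputable def taylorWeight : Measure ℝ :=
  (volume.restrict (Ioc (0 : ℝ) 1)).withDensity fun s => ENNReal.ofReal (1 - s)

/-- The finite measure `ν` representing `κ(λ,z) = μz + z² ∫ e^{λzx} ν(dx)`, including at `λ = 0`:
the image of `(1 - s) ds ⊗ x² K(dx)` under multiplication, plus the mass `c / 2` at `0`. -/
noncomputable def remainderMeasure (c : ℝ) (K : Measure ℝ) : Measure ℝ :=
  Measure.map (fun p : ℝ × ℝ => p.1 * p.2) (taylorWeight.prod (sqMeasure K)) +
    ENNReal.ofReal (c / 2) • Measure.dirac 0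

/-- The exponential moments `∫ xⁿ e^{wx} ν(dx)`, which are the derivatives of the complex moment
generating function of `ν`. -/
noncomputable def expMoment (ν : Measure ℝ) (n : ℕ) (w : ℂ) : ℂ :=
  ∫ x : ℝ, (x : ℂ) ^ n * Complex.exp (w * x) ∂ν

section TaylorKernel

theorem integral_one_sub_mul_pow (n : ℕ) :
    ∫ s in (0 : ℝ)..1, (1 - s) * s ^ n = 1 / ((n + 1) * (n + 2)) := by
  have h : ∀ s : ℝ, (1 - s) * s ^ n = s ^ n - s ^ (n + 1) := fun s => by ring
  simp only [h]
  rw [intervalIntegral.integral_sub (by simp) (by simp), integral_pow, integral_pow]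
  have h1 : (n : ℝ) + 1 ≠ 0 := by positivity
  have h2 : (n : ℝ) + 2 ≠ 0 := by positivity
  push_cast
  simp only [one_pow, zero_pow (Nat.succ_ne_zero _), sub_zero, add_assoc, one_add_one_eq_two]
  field_simp
  ring

theorem sq_mul_integral_one_sub_mul_cexp (w : ℂ) :
    w ^ 2 * ∫ s in (0 : ℝ)..1, (1 - (s : ℂ)) * Complex.exp (w * s) = Complex.exp w - 1 - w := by
  rw [← intervalIntegral.integral_const_mul, intervalIntegral.integral_eq_sub_of_hasDerivAt
    (f := fun s : ℝ => ((1 - (s : ℂ)) * w + 1) * Complex.exp (w * s)) (fun s _ => ?_)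
    (Continuous.intervalIntegrable (by fun_prop) _ _)]
  · simp only [ofReal_one, sub_self, zero_mul, zero_add, mul_one, one_mul, ofReal_zero, sub_zero,
      mul_zero, Complex.exp_zero]
    ring
  · have h : HasDerivAt (fun s : ℝ => (s : ℂ)) 1 s := Complex.ofRealCLM.hasDerivAt
    refine ((((h.const_sub 1).mul_const w).add_const 1).mul ((h.const_mul w).cexp)).congr_deriv ?_
    ring

theorem exp_mul_le_one_add_exp {s : ℝ} (hs : s ∈ Icc (0 : ℝ) 1) (t : ℝ) :
    Real.exp (s * t) ≤ 1 + Real.exp t := by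
  rcases le_total t 0 with h | h
  · have : Real.exp (s * t) ≤ 1 := Real.exp_le_one_iff.2 (mul_nonpos_of_nonneg_of_nonpos hs.1 h)
    linarith [Real.exp_pos t]
  · have : Real.exp (s * t) ≤ Real.exp t := Real.exp_le_exp.2 (mul_le_of_le_one_left h hs.2)
    linarith

theorem norm_cexp_sub_one_sub_le (w : ℂ) :
    ‖Complex.exp w - 1 - w‖ ≤ ‖w‖ ^ 2 * (1 + Real.exp w.re) := by
  rw [← sq_mul_integral_one_sub_mul_cexp, norm_mul, norm_pow]
  gcongr
  refine (intervalIntegral.norm_integral_le_of_norm_le_const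
    (C := 1 + Real.exp w.re) fun s hs => ?_).trans (by simp)
  rw [uIoc_of_le zero_le_one] at hs
  have h1 : ‖1 - (s : ℂ)‖ ≤ 1 := by
    rw [← ofReal_one, ← ofReal_sub, norm_real, Real.norm_of_nonneg (sub_nonneg.2 hs.2)]
    linarith [hs.1]
  rw [norm_mul, Complex.norm_exp, re_mul_ofReal, mul_comm w.re]
  calc _ ≤ 1 * Real.exp (s * w.re) := by gcongr
    _ ≤ _ := by rw [one_mul]; exact exp_mul_le_one_add_exp (Ioc_subset_Icc_self hs) _

end TaylorKernel

section TaylorWeight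

instance isFiniteMeasure_taylorWeight : IsFiniteMeasure taylorWeight := by
  refine isFiniteMeasure_withDensity
    (ne_top_of_le_ne_top (b := ∫⁻ _ in Ioc (0 : ℝ) 1, 1) (by simp) ?_)
  refine setLIntegral_mono measurable_const fun s hs => ?_
  rw [← ENNReal.ofReal_one]
  exact ENNReal.ofReal_le_ofReal (by linarith [hs.1])

theorem ae_taylorWeight_mem_Ioc : ∀ᵐ s ∂taylorWeight, s ∈ Ioc (0 : ℝ) 1 :=
  (withDensity_absolutelyContinuous _ _).ae_le (ae_restrict_mem measurableSet_Ioc)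

theorem integral_taylorWeight (g : ℝ → ℂ) :
    ∫ s, g s ∂taylorWeight = ∫ s in (0 : ℝ)..1, (1 - (s : ℂ)) * g s := by
  rw [taylorWeight, integral_withDensity_eq_integral_toReal_smul (by fun_prop) (by simp),
    intervalIntegral.integral_of_le zero_le_one]
  refine setIntegral_congr_fun measurableSet_Ioc fun s hs => ?_
  rw [ENNReal.toReal_ofReal (by linarith [hs.2]), Complex.real_smul, ofReal_sub, ofReal_one]

end TaylorWeight

section SqMeasure

variable {K : Measure ℝ}

theorem integral_sqMeasure (g : ℝ → ℂ) :
    ∫ x, g x ∂(sqMeasure K) = ∫ x, (x : ℂ) ^ 2 * g x ∂K := by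
  rw [sqMeasure, integral_withDensity_eq_integral_toReal_smul (by fun_prop) (by simp)]
  simp only [ENNReal.toReal_ofReal (sq_nonneg _), Complex.real_smul, ofReal_pow]

theorem integrable_sqMeasure_iff {g : ℝ → ℝ} :
    Integrable g (sqMeasure K) ↔ Integrable (fun x => x ^ 2 * g x) K := by
  rw [sqMeasure, integrable_withDensity_iff_integrable_smul' (by fun_prop) (by simp)]
  simp only [ENNReal.toReal_ofReal (sq_nonneg _), smul_eq_mul]

theorem integrableOn_sq_mul_exp_of_abs_lt_one
    (hK : ∫⁻ x : ℝ, ENNReal.ofReal (min 1 (x ^ 2)) ∂K ≠ ⊤) (r : ℝ) :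
    IntegrableOn (fun x : ℝ => x ^ 2 * Real.exp (r * x)) {x : ℝ | 1 ≤ |x|}ᶜ K := by
  have hS : MeasurableSet {x : ℝ | 1 ≤ |x|} := measurableSet_le measurable_const measurable_norm
  have hmin : Integrable (fun x : ℝ => min 1 (x ^ 2)) K := by
    refine ⟨by fun_prop, ?_⟩
    rw [hasFiniteIntegral_iff_ofReal (.of_forall fun x => le_min zero_le_one (sq_nonneg x))]
    exact lt_top_iff_ne_top.2 hK
  refine (hmin.integrableOn.const_mul (Real.exp |r|)).mono' (by fun_prop) ?_
  refine (ae_restrict_iff' hS.compl).2 (.of_forall fun x hx => ?_)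
  have hx1 : |x| ≤ 1 := le_of_lt (by simpa using hx)
  rw [Real.norm_of_nonneg (by positivity), min_eq_right ((sq_le_one_iff_abs_le_one x).2 hx1),
    mul_comm]
  gcongr
  exact (le_abs_self _).trans (abs_mul r x ▸ mul_le_of_le_one_right (abs_nonneg r) hx1)

theorem Ioo_subset_integrableExpSet_sqMeasure
    (hK : ∫⁻ x : ℝ, ENNReal.ofReal (min 1 (x ^ 2)) ∂K ≠ ⊤) {a b : ℝ}
    (hexp : ∀ s ∈ Ioo a b,
      ∫⁻ x in {x : ℝ | 1 ≤ |x|}, ENNReal.ofReal (Real.exp (s * x)) ∂K ≠ ⊤) :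
    Ioo a b ⊆ integrableExpSet id (sqMeasure K) := by
  intro r hr
  have hsub : Ioo a b ⊆ integrableExpSet id (K.restrict {x : ℝ | 1 ≤ |x|}) := fun s hs => by
    refine ⟨by fun_prop, ?_⟩
    rw [hasFiniteIntegral_iff_ofReal (.of_forall fun x => (Real.exp_pos _).le)]
    exact lt_top_iff_ne_top.2 (hexp s hs)
  have hlarge : IntegrableOn (fun x : ℝ => x ^ 2 * Real.exp (r * x)) {x : ℝ | 1 ≤ |x|} K :=
    integrable_pow_mul_exp_of_mem_interior_integrableExpSet
      (interior_maximal hsub isOpen_Ioo hr) 2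
  have := hlarge.union (integrableOn_sq_mul_exp_of_abs_lt_one hK r)
  rw [union_compl_self, integrableOn_univ] at this
  exact integrable_sqMeasure_iff.2 this

theorem isFiniteMeasure_of_zero_mem_integrableExpSet {ν : Measure ℝ}
    (h : 0 ∈ integrableExpSet id ν) : IsFiniteMeasure ν := by
  have : Integrable (fun _ : ℝ => (1 : ℝ)) ν := by simpa [integrableExpSet] using h
  exact (integrable_const_iff.1 this).resolve_left one_ne_zero

end SqMeasure

section ExpMoment

variable {ν : Measure ℝ}

theorem measurable_expMoment [SFinite ν] (n : ℕ) : Measurable (expMoment ν n) := by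
  have : Continuous fun z : ℂ × ℝ => (z.2 : ℂ) ^ n * Complex.exp (z.1 * z.2) := by fun_prop
  exact this.stronglyMeasurable.integral_prod_right'.measurable

theorem norm_expMoment_le {a b : ℝ} (ha : a ∈ interior (integrableExpSet id ν))
    (hb : b ∈ interior (integrableExpSet id ν)) (n : ℕ) {w : ℂ} (hw : w.re ∈ Icc a b) :
    ‖expMoment ν n w‖ ≤ ∫ x, (|x| ^ n * Real.exp (a * x) + |x| ^ n * Real.exp (b * x)) ∂ν := by
  refine norm_integral_le_of_norm_le
    ((integrable_pow_abs_mul_exp_of_mem_interior_integrableExpSet (X := id) ha n).add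
      (integrable_pow_abs_mul_exp_of_mem_interior_integrableExpSet (X := id) hb n))
    (.of_forall fun x => ?_)
  rw [norm_mul, norm_pow, norm_real, Real.norm_eq_abs, Complex.norm_exp, re_mul_ofReal]
  refine le_of_le_of_eq ?_ (mul_add (|x| ^ n) _ _)
  gcongr
  rcases le_total 0 x with hx | hx
  · exact le_add_of_nonneg_of_le (Real.exp_pos _).le
      (Real.exp_le_exp.2 (mul_le_mul_of_nonneg_right hw.2 hx))
  · exact le_add_of_le_of_nonneg
      (Real.exp_le_exp.2 (mul_le_mul_of_nonpos_right hw.1 hx)) (Real.exp_pos _).le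

theorem hasDerivAt_expMoment_ofReal_mul (n : ℕ) {l : ℝ} {z : ℂ}
    (h : l * z.re ∈ interior (integrableExpSet id ν)) :
    HasDerivAt (fun k : ℝ => expMoment ν n (k * z)) (expMoment ν (n + 1) (l * z) * z) l := by
  have hν : HasDerivAt (expMoment ν n) (expMoment ν (n + 1) (l * z)) (l * z) :=
    hasDerivAt_integral_pow_mul_exp (X := id) (by rwa [re_ofReal_mul]) n
  have hl : HasDerivAt (fun k : ℝ => (k : ℂ) * z) z l := by
    simpa using (Complex.ofRealCLM.hasDerivAt (x := l)).mul_const z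
  exact hν.comp l hl

end ExpMoment

section RemainderMeasure

variable {c : ℝ} {K : Measure ℝ} [IsFiniteMeasure (sqMeasure K)]

instance isFiniteMeasure_remainderMeasure : IsFiniteMeasure (remainderMeasure c K) := by
  have : IsFiniteMeasure (ENNReal.ofReal (c / 2) • Measure.dirac (0 : ℝ)) :=
    Measure.smul_finite _ (by simp)
  unfold remainderMeasure
  infer_instance

theorem integrable_exp_mul_taylorWeight_prod {r : ℝ}
    (hr : r ∈ integrableExpSet id (sqMeasure K)) :
    Integrable (fun p : ℝ × ℝ => Real.exp (r * (p.1 * p.2)))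
      (taylorWeight.prod (sqMeasure K)) := by
  have hr' : Integrable (fun x => Real.exp (r * x)) (sqMeasure K) := hr
  refine ((integrable_const 1).add (hr'.comp_snd taylorWeight)).mono' (by fun_prop) ?_
  filter_upwards [Measure.quasiMeasurePreserving_fst.ae ae_taylorWeight_mem_Ioc] with p hp
  rw [Real.norm_of_nonneg (Real.exp_pos _).le, mul_left_comm]
  exact exp_mul_le_one_add_exp (Ioc_subset_Icc_self hp) _

theorem integrableExpSet_sqMeasure_subset :
    integrableExpSet id (sqMeasure K) ⊆ integrableExpSet id (remainderMeasure c K) := by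
  intro r hr
  change Integrable _ (remainderMeasure c K)
  rw [remainderMeasure, integrable_add_measure, integrable_map_measure (by fun_prop) (by fun_prop)]
  exact ⟨integrable_exp_mul_taylorWeight_prod hr,
    (integrable_dirac (by simp)).smul_measure (by simp)⟩

theorem expMoment_remainderMeasure (hc : 0 ≤ c) (n : ℕ) {w : ℂ}
    (hw : w.re ∈ interior (integrableExpSet id (sqMeasure K))) :
    expMoment (remainderMeasure c K) n w =
      (∫ x : ℝ, (x : ℂ) ^ 2 * (∫ s in (0 : ℝ)..1, (1 - (s : ℂ)) *
        (((s * x : ℝ) : ℂ) ^ n * Complex.exp (w * (s * x : ℝ)))) ∂K) + (c / 2 : ℂ) * 0 ^ n := by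
  have hint : Integrable (fun x : ℝ => (x : ℂ) ^ n * Complex.exp (w * x))
      (remainderMeasure c K) :=
    integrable_pow_mul_cexp_of_re_mem_interior_integrableExpSet (X := id)
      (interior_mono integrableExpSet_sqMeasure_subset hw) n
  rw [remainderMeasure, integrable_add_measure,
    integrable_map_measure (by fun_prop) (by fun_prop)] at hint
  rw [expMoment, remainderMeasure, integral_add_measure
    ((integrable_map_measure (by fun_prop) (by fun_prop)).2 hint.1) hint.2, integral_smul_measure,
    integral_dirac, integral_map (by fun_prop) (by fun_prop)]
  congr 1
  · refine (integral_prod_symm _ hint.1).trans ?_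
    rw [integral_sqMeasure]
    simp only [integral_taylorWeight, Function.comp]
  · rw [ENNReal.toReal_ofReal (by positivity), Complex.real_smul]
    simp

theorem expMoment_remainderMeasure_zero (hc : 0 ≤ c) (n : ℕ)
    (h0 : 0 ∈ interior (integrableExpSet id (sqMeasure K))) :
    expMoment (remainderMeasure c K) n 0 =
      ((∫ x : ℝ, x ^ (n + 2) ∂K : ℝ) : ℂ) / ((n + 1) * (n + 2)) + (c / 2 : ℂ) * 0 ^ n := by
  rw [expMoment_remainderMeasure hc n (by simpa using h0)]
  have hx : ∀ x s : ℝ, (1 - (s : ℂ)) * (((s * x : ℝ) : ℂ) ^ n * Complex.exp (0 * (s * x : ℝ))) =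
      (((1 - s) * s ^ n : ℝ) : ℂ) * (x : ℂ) ^ n := fun x s => by
    rw [zero_mul, Complex.exp_zero]; push_cast; ring
  have hx' : ∀ x : ℝ, (x : ℂ) ^ 2 * (∫ s in (0 : ℝ)..1, (((1 - s) * s ^ n : ℝ) : ℂ) *
      (x : ℂ) ^ n) = ((x ^ (n + 2) : ℝ) : ℂ) * (1 / ((n + 1) * (n + 2))) := fun x => by
    rw [intervalIntegral.integral_mul_const, intervalIntegral.integral_ofReal,
      integral_one_sub_mul_pow]
    push_cast
    ring
  simp only [hx, hx', integral_mul_const, integral_complex_ofReal]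
  ring

theorem kappa_eq_expMoment (μ : ℝ) (hc : 0 ≤ c) {lam : ℝ} {z : ℂ}
    (h0 : 0 ∈ interior (integrableExpSet id (sqMeasure K)))
    (hz : lam * z.re ∈ interior (integrableExpSet id (sqMeasure K))) :
    kappa μ c K lam z = μ * z + z ^ 2 * expMoment (remainderMeasure c K) 0 (lam * z) := by
  rcases eq_or_ne lam 0 with rfl | hlam
  · rw [kappa, if_pos rfl, ofReal_zero, zero_mul, expMoment_remainderMeasure_zero hc 0 h0]
    push_cast
    ring
  have hlam' : (lam : ℂ) ≠ 0 := ofReal_ne_zero.2 hlam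
  rw [expMoment_remainderMeasure hc 0 (by rwa [re_ofReal_mul]), kappa, if_neg hlam]
  have hx : ∀ x : ℝ, Complex.exp (lam * z * x) - 1 - lam * z * x =
      (lam : ℂ) ^ 2 * z ^ 2 * ((x : ℂ) ^ 2 * ∫ s in (0 : ℝ)..1, (1 - (s : ℂ)) *
        (((s * x : ℝ) : ℂ) ^ 0 * Complex.exp (lam * z * (s * x : ℝ)))) := fun x => by
    have hs : ∀ s : ℝ, (lam * z * (s * x : ℝ) : ℂ) = lam * z * x * s := fun s => by
      push_cast; ring
    simp only [hs, pow_zero, one_mul, ← sq_mul_integral_one_sub_mul_cexp]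
    ring
  simp only [hx, integral_const_mul]
  field_simp
  ring

end RemainderMeasure

section RealPart

variable {K : Measure ℝ} [IsFiniteMeasure (sqMeasure K)]

theorem integrable_cexp_sub_one_sub {w : ℂ} (hw : w.re ∈ integrableExpSet id (sqMeasure K)) :
    Integrable (fun x : ℝ => Complex.exp (w * x) - 1 - w * x) K := by
  have hw' : Integrable (fun x => 1 + Real.exp (w.re * x)) (sqMeasure K) :=
    (integrable_const 1).add hw
  refine ((integrable_sqMeasure_iff.1 hw').const_mul (‖w‖ ^ 2)).mono' (by fun_prop)
    (.of_forall fun x => (norm_cexp_sub_one_sub_le _).trans_eq ?_)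
  rw [norm_mul, norm_real, mul_pow, Real.norm_eq_abs, sq_abs, re_mul_ofReal, mul_assoc]

theorem re_integral_cexp_sub_one_sub_le {w : ℂ}
    (hw : w.re ∈ integrableExpSet id (sqMeasure K)) :
    (∫ x : ℝ, (Complex.exp (w * x) - 1 - w * x) ∂K).re ≤
      (∫ x : ℝ, (Complex.exp ((w.re : ℂ) * x) - 1 - (w.re : ℂ) * x) ∂K).re := by
  have hi := integrable_cexp_sub_one_sub hw
  have hi' := integrable_cexp_sub_one_sub (K := K) (w := (w.re : ℂ)) (by simpa using hw)
  have hre := Complex.reCLM.integral_comp_comm hi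
  have hre' := Complex.reCLM.integral_comp_comm hi'
  simp only [reCLM_apply] at hre hre'
  rw [← hre, ← hre']
  refine integral_mono hi.re hi'.re fun x => ?_
  have hle : (Complex.exp (w * x)).re ≤ (Complex.exp ((w.re : ℂ) * x)).re := by
    rw [← ofReal_mul, exp_ofReal_re, ← re_mul_ofReal, ← Complex.norm_exp]
    exact re_le_norm _
  simp only [sub_re, re_mul_ofReal, ofReal_re]
  linarith

theorem kappa_re_le_kappa_ofReal_re (μ : ℝ) {c : ℝ} (hc : 0 ≤ c) {lam : ℝ} {z : ℂ}
    (hz : lam * z.re ∈ integrableExpSet id (sqMeasure K)) :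
    (kappa μ c K lam z).re ≤ (kappa μ c K lam (z.re : ℂ)).re := by
  have hsq : (z ^ 2).re ≤ ((z.re : ℂ) ^ 2).re := by
    simp only [sq, mul_re, ofReal_re, ofReal_im]
    nlinarith [mul_self_nonneg z.im]
  rw [kappa, kappa]
  split_ifs with hlam
  · have hS : 0 ≤ (c + ∫ x : ℝ, x ^ 2 ∂K) / 2 :=
      div_nonneg (add_nonneg hc (integral_nonneg fun x => sq_nonneg x)) zero_le_two
    rw [← ofReal_ofNat, ← ofReal_div]
    simp only [add_re, re_ofReal_mul, ofReal_re]
    linarith [mul_le_mul_of_nonneg_left hsq hS]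
  · have hI := re_integral_cexp_sub_one_sub_le (K := K) (w := lam * z) (by rwa [re_ofReal_mul])
    rw [re_ofReal_mul, ofReal_mul] at hI
    rw [← ofReal_ofNat, ← ofReal_div, ← ofReal_pow, ← ofReal_inv]
    simp only [add_re, re_ofReal_mul, ofReal_re]
    linarith [mul_le_mul_of_nonneg_left hsq (div_nonneg hc zero_le_two),
      mul_le_mul_of_nonneg_left hI (inv_nonneg.2 (sq_nonneg lam))]

end RealPart

section CumulantJet

/-- The jet of `κ(λ,z) = μz + z² ∫ e^{λzx} ν(dx)` in `λ`. -/
noncomputable def cumulantJet (μ : ℝ) (ν : Measure ℝ) : TwoJet ℂ where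
  val x := μ * x.2 + x.2 ^ 2 * expMoment ν 0 (x.1 * x.2)
  deriv x := x.2 ^ 3 * expMoment ν 1 (x.1 * x.2)
  deriv₂ x := x.2 ^ 4 * expMoment ν 2 (x.1 * x.2)

theorem hasPolyGrowth_id (S : Set ℂ) : HasPolyGrowth S (fun z => 1 + ‖z‖) fun z => z :=
  .of_norm_le measurable_id (fun z _ => le_add_of_nonneg_right (norm_nonneg z)) 1 1 fun z _ => by
    simp

variable {ν : Measure ℝ} {U : Set ℝ} {S : Set ℂ} {a b : ℝ}

theorem hasPolyGrowth_expMoment [SFinite ν] (ha : a ∈ interior (integrableExpSet id ν))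
    (hb : b ∈ interior (integrableExpSet id ν))
    (hU : ∀ l ∈ U, ∀ z ∈ S, l * z.re ∈ Icc a b) (n : ℕ) :
    HasPolyGrowth (U ×ˢ S) (fun x => 1 + ‖x.2‖) fun x => expMoment ν n (x.1 * x.2) :=
  .of_norm_le ((measurable_expMoment n).comp (by fun_prop))
    (fun x _ => le_add_of_nonneg_right (norm_nonneg x.2)) _ 0 fun x hx => by
      rw [pow_zero, mul_one]
      exact norm_expMoment_le ha hb n (by simpa using hU x.1 hx.1 x.2 hx.2)

theorem isRegular_cumulantJet [SFinite ν] (μ : ℝ) (ha : a ∈ interior (integrableExpSet id ν))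
    (hb : b ∈ interior (integrableExpSet id ν))
    (hU : ∀ l ∈ U, ∀ z ∈ S, l * z.re ∈ Icc a b) :
    (cumulantJet μ ν).IsRegular U S fun z => 1 + ‖z‖ := by
  have hderiv : ∀ n : ℕ, ∀ l ∈ U, ∀ z ∈ S, HasDerivAt (fun k : ℝ => expMoment ν n (k * z))
      (expMoment ν (n + 1) (l * z) * z) l := fun n l hl z hz =>
    hasDerivAt_expMoment_ofReal_mul n <|
      convex_integrableExpSet.interior.ordConnected.out ha hb (hU l hl z hz)
  have hid : HasPolyGrowth (U ×ˢ S) (fun x => 1 + ‖x.2‖) fun x => x.2 :=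
    (hasPolyGrowth_id S).comp measurable_snd (fun _ hx => hx.2) fun _ _ => le_rfl
  have hmom := hasPolyGrowth_expMoment ha hb hU
  exact
    { hasDerivAt := fun l hl z hz =>
        (((hderiv 0 l hl z hz).const_mul (z ^ 2)).const_add (μ * z)).congr_deriv (by
          change _ = z ^ 3 * expMoment ν 1 (l * z); ring)
      hasDerivAt_deriv := fun l hl z hz =>
        ((hderiv 1 l hl z hz).const_mul (z ^ 3)).congr_deriv (by
          change _ = z ^ 4 * expMoment ν 2 (l * z); ring)
      continuousOn := fun z hz => HasDerivAt.continuousOn fun l hl =>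
        (hderiv 2 l hl z hz).const_mul (z ^ 4)
      val_growth := (hid.const_mul μ).add ((hid.pow 2).mul (hmom 0))
      deriv_growth := (hid.pow 3).mul (hmom 1)
      deriv₂_growth := (hid.pow 4).mul (hmom 2) }

theorem exists_norm_le_of_hasPolyGrowth_ofReal {f : ℝ × ℂ → ℂ} {m M : ℝ}
    (hf : HasPolyGrowth (U ×ˢ (re ⁻¹' Icc m M)) (fun x => 1 + ‖x.2‖) f) :
    ∃ B : ℝ, ∀ l ∈ U, ∀ r ∈ Icc m M, ‖f (l, r)‖ ≤ B := by
  obtain ⟨C, hC, N, hb⟩ := hf.exists_norm_le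
  refine ⟨C * (1 + max |m| |M|) ^ N, fun l hl r hr => (hb (l, r) ⟨hl, by simpa using hr⟩).trans ?_⟩
  gcongr
  rw [norm_real]
  exact abs_le_max_abs_abs hr.1 hr.2

end CumulantJet

section LevyKhintchine

variable {c : ℝ} {K : Measure ℝ} {a b m M : ℝ}

theorem exists_isOpen_mul_mem_Ioo (ham : a < m) (hm : m ≤ 0) (hM : 0 ≤ M) (hMb : M < b) :
    ∃ U : Set ℝ, IsOpen U ∧ Icc 0 1 ⊆ U ∧ ∀ l ∈ U, ∀ r ∈ Icc m M, l * r ∈ Ioo a b := by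
  refine ⟨(· * m) ⁻¹' Ioo a b ∩ (· * M) ⁻¹' Ioo a b,
    (isOpen_Ioo.preimage (continuous_mul_const m)).inter
      (isOpen_Ioo.preimage (continuous_mul_const M)), fun l hl => ?_, fun l hl r hr => ?_⟩
  · exact ⟨⟨by nlinarith [hl.1, hl.2], by nlinarith [hl.1]⟩, by nlinarith [hl.1],
      by nlinarith [hl.1, hl.2]⟩
  · refine ordConnected_Ioo.uIcc_subset hl.1 hl.2 ?_
    rw [← image_const_mul_uIcc, uIcc_of_le (hm.trans hM)]
    exact mem_image_of_mem _ hr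

theorem exists_isRegular_cumulantJet (μ : ℝ) (hc : 0 ≤ c)
    (hK : ∫⁻ x : ℝ, ENNReal.ofReal (min 1 (x ^ 2)) ∂K ≠ ⊤)
    (hexp : ∀ s ∈ Ioo a b,
      ∫⁻ x in {x : ℝ | 1 ≤ |x|}, ENNReal.ofReal (Real.exp (s * x)) ∂K ≠ ⊤)
    (ham : a < m) (hm : m ≤ 0) (hM : 0 ≤ M) (hMb : M < b) :
    ∃ U : Set ℝ, IsOpen U ∧ Icc 0 1 ⊆ U ∧
      (cumulantJet μ (remainderMeasure c K)).IsRegular U (re ⁻¹' Icc m M) (fun z => 1 + ‖z‖) ∧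
      (∀ l ∈ U, ∀ z ∈ re ⁻¹' Icc m M,
        kappa μ c K l z = (cumulantJet μ (remainderMeasure c K)).val (l, z)) ∧
      ∃ B : ℝ, ∀ l ∈ U, ∀ z ∈ re ⁻¹' Icc m M,
        ((cumulantJet μ (remainderMeasure c K)).val (l, z)).re ≤ B := by
  obtain ⟨a', haa', ha'm⟩ := exists_between ham
  obtain ⟨b', hMb', hbb'⟩ := exists_between hMb
  obtain ⟨U, hU, h01, hUmem⟩ := exists_isOpen_mul_mem_Ioo ha'm hm hM hMb'
  have hsub := Ioo_subset_integrableExpSet_sqMeasure hK hexp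
  have hint : Ioo a b ⊆ interior (integrableExpSet id (sqMeasure K)) :=
    interior_maximal hsub isOpen_Ioo
  have hmem : ∀ l ∈ U, ∀ z ∈ re ⁻¹' Icc m M, l * z.re ∈ Ioo a b := fun l hl z hz =>
    Ioo_subset_Ioo haa'.le hbb'.le (hUmem l hl z.re hz)
  have := isFiniteMeasure_of_zero_mem_integrableExpSet (hsub ⟨by linarith, by linarith⟩)
  have hν : Ioo a b ⊆ interior (integrableExpSet id (remainderMeasure c K)) :=
    hint.trans (interior_mono integrableExpSet_sqMeasure_subset)
  have hkappa : ∀ l ∈ U, ∀ z ∈ re ⁻¹' Icc m M,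
      kappa μ c K l z = (cumulantJet μ (remainderMeasure c K)).val (l, z) := fun l hl z hz =>
    kappa_eq_expMoment μ hc (hint ⟨by linarith, by linarith⟩) (hint (hmem l hl z hz))
  have hreg : (cumulantJet μ (remainderMeasure c K)).IsRegular U (re ⁻¹' Icc m M)
      (fun z => 1 + ‖z‖) :=
    isRegular_cumulantJet μ (hν ⟨haa', by linarith⟩) (hν ⟨by linarith, hbb'⟩)
      fun l hl z hz => Ioo_subset_Icc_self (hUmem l hl z.re hz)
  refine ⟨U, hU, h01, hreg, hkappa, ?_⟩
  obtain ⟨B, hB⟩ := exists_norm_le_of_hasPolyGrowth_ofReal hreg.val_growth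
  refine ⟨B, fun l hl z hz => ?_⟩
  have hre : (z.re : ℂ) ∈ re ⁻¹' Icc m M := by simpa using hz
  rw [← hkappa l hl z hz]
  refine (kappa_re_le_kappa_ofReal_re μ hc (hsub (hmem l hl z hz))).trans ?_
  rw [hkappa l hl _ hre]
  exact (re_le_norm _).trans (hB l hl _ hz)

variable [IsFiniteMeasure (sqMeasure K)]

theorem cumulantJet_val_zero (μ : ℝ) (hc : 0 ≤ c)
    (h0 : 0 ∈ interior (integrableExpSet id (sqMeasure K))) (z : ℂ) :
    (cumulantJet μ (remainderMeasure c K)).val (0, z) =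
      μ * z + ((c + ∫ x : ℝ, x ^ 2 ∂K : ℝ) : ℂ) / 2 * z ^ 2 := by
  simp only [cumulantJet, ofReal_zero, zero_mul, expMoment_remainderMeasure_zero hc 0 h0]
  push_cast
  ring

theorem cumulantJet_deriv_zero (μ : ℝ) (hc : 0 ≤ c)
    (h0 : 0 ∈ interior (integrableExpSet id (sqMeasure K))) (z : ℂ) :
    (cumulantJet μ (remainderMeasure c K)).deriv (0, z) =
      z ^ 3 * (((∫ x : ℝ, x ^ 3 ∂K : ℝ) : ℂ) / 6) := by
  simp only [cumulantJet, ofReal_zero, zero_mul, expMoment_remainderMeasure_zero hc 1 h0]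
  push_cast
  ring

theorem cumulantJet_deriv₂_zero (μ : ℝ) (hc : 0 ≤ c)
    (h0 : 0 ∈ interior (integrableExpSet id (sqMeasure K))) (z : ℂ) :
    (cumulantJet μ (remainderMeasure c K)).deriv₂ (0, z) =
      z ^ 4 * (((∫ x : ℝ, x ^ 4 ∂K : ℝ) : ℂ) / 12) := by
  simp only [cumulantJet, ofReal_zero, zero_mul, expMoment_remainderMeasure_zero hc 2 h0]
  push_cast
  ring

end LevyKhintchine

/-! ### The hedging error as a functional of the cumulant function -/

section HedgeFunctional

/-- The Black–Scholes exponent `½σ²z(z-1)`, the cumulant function of the discounted Gaussian model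
under its martingale measure. -/
noncomputable def bsExponent (σ2 : ℝ) (z : ℂ) : ℂ := (σ2 : ℂ) / 2 * z * (z - 1)

/-- The factor `e^{½σ²z(z-1)τ}` by which the payoff `s^z` is priced at time to maturity `τ`; the
argument is the pair `(z, τ)`. -/
noncomputable def bsFactor (σ2 : ℝ) (p : ℂ × ℝ) : ℂ := Complex.exp (bsExponent σ2 p.1 * p.2)

/-- The coefficient `κ̄(y,z)` of the covariation of `S^y` and `S^z` for the cumulant
function `κ`. -/
def cumulantBar (κ : ℂ → ℂ) (y z : ℂ) : ℂ := κ (y + z) - κ y - κ z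

/-- The coefficient `α(z,t)` of the Black–Scholes hedge of `s^z` for the cumulant function `κ`. -/
noncomputable def hedgeAlpha (σ2 T : ℝ) (κ : ℂ → ℂ) (z : ℂ) (t : ℝ) : ℂ :=
  (1 - κ 1 * ∫ u in t..T, z * Complex.exp (κ z * ((u : ℂ) - T)) *
      Complex.exp ((σ2 : ℂ) / 2 * z * (z - 1) * ((T : ℂ) - u))) *
    Complex.exp (κ z * ((T : ℂ) - t))

/-- The integrand `h(t,y,z)` of the variance of the hedging error for the cumulant function `κ`. -/
noncomputable def hedgeKernel (σ2 T : ℝ) (κ : ℂ → ℂ) (t : ℝ) (y z : ℂ) : ℂ :=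
  cumulantBar κ y z * hedgeAlpha σ2 T κ y t * hedgeAlpha σ2 T κ z t -
    cumulantBar κ y 1 * hedgeAlpha σ2 T κ y t * z *
      Complex.exp ((σ2 : ℂ) / 2 * z * (z - 1) * ((T : ℂ) - t)) -
    cumulantBar κ z 1 * hedgeAlpha σ2 T κ z t * y *
      Complex.exp ((σ2 : ℂ) / 2 * y * (y - 1) * ((T : ℂ) - t)) +
    cumulantBar κ 1 1 * y * z *
      Complex.exp ((σ2 : ℂ) / 2 * (z * (z - 1) + y * (y - 1)) * ((T : ℂ) - t))

/-- The initial capital `w` of the variance-optimal hedge for the cumulant function `κ`. -/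
noncomputable def hedgeCapital (σ2 T S₀ R : ℝ) (l : ℝ → ℝ) (κ : ℂ → ℂ) : ℂ :=
  ∫ y : ℝ, cpowR S₀ (zLine R y) * hedgeAlpha σ2 T κ (zLine R y) 0 * pCoef l y

/-- The Black–Scholes price `c` of the payoff at time `0`. -/
noncomputable def bsPrice (σ2 T S₀ R : ℝ) (l : ℝ → ℝ) : ℂ :=
  ∫ y : ℝ, cpowR S₀ (zLine R y) *
    Complex.exp ((σ2 : ℂ) / 2 * zLine R y * (zLine R y - 1) * (T : ℂ)) * pCoef l y

/-- The variance part `∫∫∫ J₂ p p dt du dv` of the mean squared hedging error. -/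
noncomputable def hedgeVariance (σ2 T S₀ R : ℝ) (l : ℝ → ℝ) (κ : ℂ → ℂ) : ℂ :=
  ∫ u : ℝ, ∫ v : ℝ, ∫ t in (0 : ℝ)..T,
    cpowR S₀ (zLine R u + zLine R v) * Complex.exp (κ (zLine R u + zLine R v) * (t : ℂ)) *
      hedgeKernel σ2 T κ t (zLine R u) (zLine R v) * pCoef l u * pCoef l v

/-- The mean squared error `ε²` of the Black–Scholes hedge for the cumulant function `κ`. -/
noncomputable def hedgeError (σ2 T S₀ R : ℝ) (l : ℝ → ℝ) (κ : ℂ → ℂ) : ℂ :=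
  (hedgeCapital σ2 T S₀ R l κ - bsPrice σ2 T S₀ R l) ^ 2 + hedgeVariance σ2 T S₀ R l κ

variable {σ2 T R : ℝ} {m M : ℝ}

theorem zLine_re (R y : ℝ) : (zLine R y).re = R := by simp [zLine]

theorem hedgeError_congr {κ κ' : ℂ → ℂ} (h0 : 0 ∈ Icc m M) (h2 : 2 ∈ Icc m M)
    (h2R : 2 * R ∈ Icc m M) (hκ : EqOn κ κ' (re ⁻¹' Icc m M)) (σ2 T S₀ : ℝ) (l : ℝ → ℝ) :
    hedgeError σ2 T S₀ R l κ = hedgeError σ2 T S₀ R l κ' := by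
  have hmem : ∀ z : ℂ, z.re ∈ Icc m M → κ z = κ' z := fun z hz => hκ hz
  have h_one : κ 1 = κ' 1 := hmem 1 ⟨by simpa using h0.1.trans zero_le_one,
    by simpa using one_le_two.trans h2.2⟩
  have h_two : κ (1 + 1) = κ' (1 + 1) := hmem _ (by norm_num; exact h2)
  have hline : ∀ u, κ (zLine R u) = κ' (zLine R u) := fun u => hmem _ (by
    rw [zLine_re]; constructor <;> linarith [h0.1, h0.2, h2R.1, h2R.2])
  have hline_one : ∀ u, κ (zLine R u + 1) = κ' (zLine R u + 1) := fun u => hmem _ (by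
    rw [add_re, zLine_re, one_re]; constructor <;> linarith [h2.1, h2.2, h2R.1, h2R.2])
  have hline_add : ∀ u v, κ (zLine R u + zLine R v) = κ' (zLine R u + zLine R v) :=
    fun u v => hmem _ (by rw [add_re, zLine_re, zLine_re, ← two_mul]; exact h2R)
  simp only [hedgeError, hedgeCapital, hedgeVariance, hedgeKernel, hedgeAlpha, cumulantBar, h_one,
    h_two, hline, hline_one, hline_add]

end HedgeFunctional

/-! ### Jets of the hedge coefficients -/

section Strip

variable {S : Set ℂ} {σ2 T R : ℝ}

theorem one_le_two_add_norm (z : ℂ) : 1 ≤ 2 + ‖z‖ :=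
  one_le_two.trans (le_add_of_nonneg_right (norm_nonneg z))

theorem hasPolyGrowth_fst (S : Set ℂ) (I : Set ℝ) :
    HasPolyGrowth (S ×ˢ I) (fun p : ℂ × ℝ => 2 + ‖p.1‖) fun p => p.1 :=
  (hasPolyGrowth_id S).comp measurable_fst (fun _ hp => hp.1) fun p _ => by gcongr; norm_num

theorem hasPolyGrowth_snd (S : Set ℂ) (T : ℝ) :
    HasPolyGrowth (S ×ˢ Icc 0 T) (fun p : ℂ × ℝ => 2 + ‖p.1‖) fun p => (p.2 : ℂ) :=
  .of_norm_le (by fun_prop) (fun p _ => one_le_two_add_norm p.1) T 0 fun p hp => by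
    rw [pow_zero, mul_one, norm_real, Real.norm_of_nonneg hp.2.1]
    exact hp.2.2

theorem re_mul_ofReal_le {x : ℂ} {B s : ℝ} (hx : x.re ≤ B) (hs : s ∈ Icc 0 T) :
    (x * s).re ≤ |B| * T := by
  rw [re_mul_ofReal]
  exact mul_le_mul (hx.trans (le_abs_self B)) hs.2 hs.1 (abs_nonneg B)

theorem re_bsExponent_le (hσ : 0 ≤ σ2) {z : ℂ} (hz : z.re = R) :
    (bsExponent σ2 z).re ≤ σ2 / 2 * |R * (R - 1)| := by
  have hfac : bsExponent σ2 z = ((σ2 / 2 : ℝ) : ℂ) * (z * (z - 1)) := by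
    rw [bsExponent]; push_cast; ring
  rw [hfac, re_ofReal_mul]
  gcongr
  simp only [mul_re, sub_re, one_re, sub_im, one_im, sub_zero, hz]
  linarith [le_abs_self (R * (R - 1)), mul_self_nonneg z.im]

theorem hasPolyGrowth_bsFactor (hσ : 0 ≤ σ2) (R T : ℝ) :
    HasPolyGrowth ((re ⁻¹' {R}) ×ˢ Icc 0 T) (fun p : ℂ × ℝ => 2 + ‖p.1‖) (bsFactor σ2) :=
  .exp (by unfold bsExponent; fun_prop) (fun p _ => one_le_two_add_norm p.1) fun _ hp =>
    re_mul_ofReal_le (re_bsExponent_le hσ hp.1) hp.2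

theorem cpowR_add (s : ℝ) (y z : ℂ) : cpowR s (y + z) = cpowR s y * cpowR s z := by
  rw [cpowR, cpowR, cpowR, add_mul, Complex.exp_add]

theorem cpowR_mul_exp {s : ℝ} (hs : 0 < s) (x : ℝ) (z : ℂ) :
    cpowR (s * Real.exp x) z = cpowR s z * Complex.exp (z * x) := by
  rw [cpowR, cpowR, Real.log_mul hs.ne' (Real.exp_ne_zero x), Real.log_exp, ofReal_add, mul_add,
    Complex.exp_add]

theorem norm_cpowR (s : ℝ) (z : ℂ) : ‖cpowR s z‖ = Real.exp (z.re * Real.log s) := by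
  rw [cpowR, Complex.norm_exp, re_mul_ofReal]

theorem measurable_cpowR (s : ℝ) : Measurable (cpowR s) := by
  unfold cpowR; fun_prop

theorem hasPolyGrowth_cpowR (s R : ℝ) (I : Set ℝ) :
    HasPolyGrowth ((re ⁻¹' {R}) ×ˢ I) (fun q : ℂ × ℝ => 2 + ‖q.1‖) fun q => cpowR s q.1 :=
  .of_norm_le ((measurable_cpowR s).comp measurable_fst) (fun q _ => one_le_two_add_norm q.1)
    (Real.exp (R * Real.log s)) 0 fun q hq => by
      rw [norm_cpowR, show q.1.re = R from hq.1, pow_zero, mul_one]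

theorem add_re_eq_two_mul {I : Set ℝ} {q : (ℂ × ℂ) × ℝ}
    (hq : q ∈ ((re ⁻¹' {R}) ×ˢ (re ⁻¹' {R})) ×ˢ I) : (q.1.1 + q.1.2).re = 2 * R := by
  rw [add_re, show q.1.1.re = R from hq.1.1, show q.1.2.re = R from hq.1.2, two_mul]

theorem one_le_two_add_norm_mul (y z : ℂ) : 1 ≤ (2 + ‖y‖) * (2 + ‖z‖) :=
  one_le_mul_of_one_le_of_one_le (one_le_two_add_norm y) (one_le_two_add_norm z)

theorem hasPolyGrowth_cpowR_add (s R : ℝ) (I : Set ℝ) :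
    HasPolyGrowth (((re ⁻¹' {R}) ×ˢ (re ⁻¹' {R})) ×ˢ I)
      (fun q => (2 + ‖q.1.1‖) * (2 + ‖q.1.2‖)) fun q => cpowR s (q.1.1 + q.1.2) :=
  .of_norm_le ((measurable_cpowR s).comp (by fun_prop)) (fun _ _ => one_le_two_add_norm_mul _ _)
    (Real.exp (2 * R * Real.log s)) 0 fun q hq => by
      rw [norm_cpowR, add_re_eq_two_mul hq, pow_zero, mul_one]

end Strip

namespace TwoJet

/-- Jets that can play the role of the cumulant function `κ(λ,z)`: regular in the strip
`m ≤ Re z ≤ M`, with real part bounded above, so that `e^{κt}` is bounded. -/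
structure IsExponent (U : Set ℝ) (m M : ℝ) (k : TwoJet ℂ) : Prop where
  isRegular : k.IsRegular U (re ⁻¹' Icc m M) fun z => 1 + ‖z‖
  exists_re_le : ∃ B : ℝ, ∀ l ∈ U, ∀ z ∈ re ⁻¹' Icc m M, (k.val (l, z)).re ≤ B

/-- The jet of `e^{κ(λ,z)t}` at `(z,t)`. The growth of this and the following jets is measured by
`2 + ‖z‖` instead of `1 + ‖z‖` because `α` and `h` also evaluate `κ` at `1`. -/
noncomputable def timeExp (k : TwoJet ℂ) : TwoJet (ℂ × ℝ) :=
  (k.comap Prod.fst * const fun p : ℂ × ℝ => (p.2 : ℂ)).exp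

/-- The jet of the integrand `e^{κ(λ,z)τs}e^{½σ²z(z-1)τ(1-s)}` of `α` at `((z,τ),s)`, after the
integral over `[T-τ,T]` has been rescaled to `[0,1]`. -/
noncomputable def alphaIntegrandJet (σ2 : ℝ) (k : TwoJet ℂ) : TwoJet ((ℂ × ℝ) × ℝ) :=
  (k.timeExp.comap fun p => (p.1.1, p.1.2 * p.2)) *
    const fun p => bsFactor σ2 (p.1.1, p.1.2 * (1 - p.2))

/-- The jet of `α(λ;z,T-τ)` at `(z,τ)`. -/
noncomputable def alphaJet (σ2 : ℝ) (k : TwoJet ℂ) : TwoJet (ℂ × ℝ) :=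
  k.timeExp - (k.comap fun _ => 1) * ((const fun p => p.1 * p.2) *
    integral (volume.restrict (Ioc 0 1)) (fun _ => 1) (alphaIntegrandJet σ2 k))

/-- The jet of `κ̄(λ;y,z)` at `(y,z)`. -/
noncomputable def cumulantBarJet (k : TwoJet ℂ) : TwoJet (ℂ × ℂ) :=
  (k.comap fun p => p.1 + p.2) - k.comap Prod.fst - k.comap Prod.snd

/-- The jet of the hedge ratio `ze^{½σ²z(z-1)τ}` of the payoff `s^z`, at `(z,τ)`. -/
noncomputable def deltaJet (σ2 : ℝ) : TwoJet (ℂ × ℝ) := const fun p => p.1 * bsFactor σ2 p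

/-- The jet of `h(λ;t,y,z)` at `((y,z),t)`. -/
noncomputable def kernelJet (σ2 T : ℝ) (k : TwoJet ℂ) : TwoJet ((ℂ × ℂ) × ℝ) :=
  k.cumulantBarJet.comap (fun p => p.1) *
      (((k.alphaJet σ2).comap fun p => (p.1.1, T - p.2)) *
        (k.alphaJet σ2).comap fun p => (p.1.2, T - p.2)) -
    k.cumulantBarJet.comap (fun p => (p.1.1, 1)) *
      (((k.alphaJet σ2).comap fun p => (p.1.1, T - p.2)) *
        (deltaJet σ2).comap fun p => (p.1.2, T - p.2)) -
    k.cumulantBarJet.comap (fun p => (p.1.2, 1)) *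
      (((k.alphaJet σ2).comap fun p => (p.1.2, T - p.2)) *
        (deltaJet σ2).comap fun p => (p.1.1, T - p.2)) +
    k.cumulantBarJet.comap (fun _ => (1, 1)) *
      (((deltaJet σ2).comap fun p => (p.1.1, T - p.2)) *
        (deltaJet σ2).comap fun p => (p.1.2, T - p.2))

/-- The jet of `J₂(λ;t,y,z)` at `((y,z),t)`. -/
noncomputable def varianceJet (σ2 T S₀ : ℝ) (k : TwoJet ℂ) : TwoJet ((ℂ × ℂ) × ℝ) :=
  (const fun p => cpowR S₀ (p.1.1 + p.1.2)) *
    (k.timeExp.comap fun p => (p.1.1 + p.1.2, p.2)) * k.kernelJet σ2 T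

section Values

variable {σ2 T : ℝ} {k : TwoJet ℂ}

theorem val_alphaJet (l t : ℝ) (z : ℂ) :
    (k.alphaJet σ2).val (l, (z, T - t)) = hedgeAlpha σ2 T (fun x => k.val (l, x)) z t := by
  set κ := k.val (l, z) with hκ
  set g : ℝ → ℂ := fun u => z * Complex.exp (κ * ((u : ℂ) - T)) *
    Complex.exp ((σ2 : ℂ) / 2 * z * (z - 1) * ((T : ℂ) - u)) with hg
  have hsub : (∫ u in t..T, g u) = (T - t) * ∫ s in (0 : ℝ)..1, g ((T - t) * s + t) := by
    have := intervalIntegral.smul_integral_comp_mul_add (a := 0) (b := 1) g (T - t) t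
    rw [mul_zero, zero_add, mul_one, sub_add_cancel, real_smul, ofReal_sub] at this
    exact this.symm
  have hscale : ∀ s : ℝ, g ((T - t) * s + t) * Complex.exp (κ * ((T : ℂ) - t)) =
      z * (Complex.exp (κ * (((T - t) * s : ℝ) : ℂ)) * bsFactor σ2 (z, (T - t) * (1 - s))) := by
    intro s
    simp only [hg, bsFactor, bsExponent, mul_assoc, ← Complex.exp_add]
    congr 2
    push_cast
    ring
  have hint : z * (∫ s in Ioc (0 : ℝ) 1, (alphaIntegrandJet σ2 k).val (l, ((z, T - t), s)) * 1) =
      (∫ s in (0 : ℝ)..1, g ((T - t) * s + t)) * Complex.exp (κ * ((T : ℂ) - t)) := by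
    rw [← intervalIntegral.integral_of_le zero_le_one, ← intervalIntegral.integral_mul_const,
      ← intervalIntegral.integral_const_mul]
    exact intervalIntegral.integral_congr fun s _ => by
      simpa only [mul_one, alphaIntegrandJet, timeExp, const, comap, exp, val_mul, ← hκ] using
        (hscale s).symm
  simp only [hedgeAlpha, ← hκ]
  rw [hsub]
  simp only [alphaJet, timeExp, const, comap, exp, integral, val_sub, val_mul, ofReal_sub, ← hκ]
  linear_combination (-k.val (l, 1) * ((T : ℂ) - t)) * hint

theorem val_kernelJet (l t : ℝ) (y z : ℂ) :
    (k.kernelJet σ2 T).val (l, ((y, z), t)) =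
      hedgeKernel σ2 T (fun x => k.val (l, x)) t y z := by
  have hexp : bsFactor σ2 (y, T - t) * bsFactor σ2 (z, T - t) =
      Complex.exp ((σ2 : ℂ) / 2 * (z * (z - 1) + y * (y - 1)) * ((T : ℂ) - t)) := by
    simp only [bsFactor, bsExponent, ← Complex.exp_add]
    congr 1
    push_cast
    ring
  rw [hedgeKernel, ← hexp]
  simp only [kernelJet, cumulantBarJet, deltaJet, val_add, val_sub, val_mul, comap, const,
    val_alphaJet, cumulantBar, bsFactor, bsExponent, ofReal_sub]
  ring

end Values

section Regularity

variable {U : Set ℝ} {m M R σ2 T S₀ : ℝ} {k : TwoJet ℂ}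

theorem IsExponent.timeExp (hk : k.IsExponent U m M) (T : ℝ) :
    k.timeExp.IsRegular U ((re ⁻¹' Icc m M) ×ˢ Icc 0 T) fun p => 2 + ‖p.1‖ := by
  obtain ⟨B, hB⟩ := hk.exists_re_le
  exact ((hk.isRegular.comap measurable_fst (fun _ hp => hp.1) fun _ _ => by gcongr; norm_num).mul
    (.const (hasPolyGrowth_snd _ T))).exp fun l hl p hp => re_mul_ofReal_le (hB l hl _ hp.1) hp.2

theorem IsExponent.alphaIntegrandJet (hk : k.IsExponent U m M) (hR : R ∈ Icc m M) (hσ : 0 ≤ σ2)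
    (T : ℝ) :
    (k.alphaIntegrandJet σ2).IsRegular U (((re ⁻¹' {R}) ×ˢ Icc 0 T) ×ˢ Icc (0 : ℝ) 1)
      fun p => 2 + ‖p.1.1‖ := by
  have hmul : ∀ τ ∈ Icc 0 T, ∀ s ∈ Icc (0 : ℝ) 1, τ * s ∈ Icc 0 T := fun τ hτ s hs =>
    ⟨mul_nonneg hτ.1 hs.1, (mul_le_of_le_one_right hτ.1 hs.2).trans hτ.2⟩
  refine IsRegular.mul ?_ (.const ?_)
  · refine (hk.timeExp T).comap (by fun_prop) (fun p hp => ⟨?_, hmul _ hp.1.2 _ hp.2⟩)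
      fun _ _ => le_rfl
    rw [mem_preimage, show p.1.1.re = R from hp.1.1]
    exact hR
  · exact (hasPolyGrowth_bsFactor hσ R T).comp (by fun_prop)
      (fun p hp => ⟨hp.1.1, hmul _ hp.1.2 _ (sub_mem_Icc_zero_iff_right.2 hp.2)⟩)
      fun _ _ => le_rfl

theorem IsExponent.alphaJet (hk : k.IsExponent U m M) (hU : IsOpen U) (hR : R ∈ Icc m M)
    (h1 : 1 ∈ Icc m M) (hσ : 0 ≤ σ2) (T : ℝ) :
    (k.alphaJet σ2).IsRegular U ((re ⁻¹' {R}) ×ˢ Icc 0 T) fun p => 2 + ‖p.1‖ := by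
  have hone : (k.comap fun _ : ℂ × ℝ => (1 : ℂ)).IsRegular U ((re ⁻¹' {R}) ×ˢ Icc 0 T)
      fun p => 2 + ‖p.1‖ :=
    hk.isRegular.comap measurable_const (fun _ _ => by simpa using h1) fun p _ => by
      rw [norm_one]; linarith [norm_nonneg p.1]
  have hint : (integral (volume.restrict (Ioc (0 : ℝ) 1)) (fun _ => 1)
      (k.alphaIntegrandJet σ2)).IsRegular U ((re ⁻¹' {R}) ×ˢ Icc 0 T) fun p => 2 + ‖p.1‖ := by
    refine (hk.alphaIntegrandJet hR hσ T).integral (r := fun _ => 1) hU measurable_const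
      (fun p _ => one_le_two_add_norm p.1) (fun p hp => ?_) fun N => by simp
    filter_upwards [ae_restrict_mem measurableSet_Ioc] with s hs
    exact ⟨⟨hp, Ioc_subset_Icc_self hs⟩, (mul_one _).ge⟩
  have hline : re ⁻¹' {R} ⊆ re ⁻¹' Icc m M := preimage_mono (singleton_subset_iff.2 hR)
  exact ((hk.timeExp T).comap measurable_id (prod_mono_left hline) fun _ _ => le_rfl).sub
    (hone.mul ((IsRegular.const ((hasPolyGrowth_fst _ _).mul (hasPolyGrowth_snd _ T))).mul hint))

theorem IsExponent.cumulantBarJet (hk : k.IsExponent U m M) {Ω : Type*} [MeasurableSpace Ω]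
    {A : Set Ω} {ρ : Ω → ℝ} {φ : Ω → ℂ × ℂ} (hφ : Measurable φ)
    (hA : ∀ w ∈ A, (φ w).1.re ∈ Icc m M ∧ (φ w).2.re ∈ Icc m M ∧ (φ w).1.re + (φ w).2.re ∈ Icc m M)
    (hρ : ∀ w ∈ A, 1 + ‖(φ w).1‖ + ‖(φ w).2‖ ≤ ρ w) :
    (k.cumulantBarJet.comap φ).IsRegular U A ρ := by
  change ((k.comap fun w => (φ w).1 + (φ w).2) - (k.comap fun w => (φ w).1) -
    k.comap fun w => (φ w).2).IsRegular U A ρ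
  refine IsRegular.sub (IsRegular.sub ?_ ?_) ?_
  · exact hk.isRegular.comap (by fun_prop) (fun w hw => (hA w hw).2.2) fun w hw =>
      le_trans (by linarith [norm_add_le (φ w).1 (φ w).2]) (hρ w hw)
  · exact hk.isRegular.comap hφ.fst (fun w hw => (hA w hw).1) fun w hw =>
      le_trans (by linarith [norm_nonneg (φ w).2]) (hρ w hw)
  · exact hk.isRegular.comap hφ.snd (fun w hw => (hA w hw).2.1) fun w hw =>
      le_trans (by linarith [norm_nonneg (φ w).1]) (hρ w hw)

theorem isRegular_deltaJet (hσ : 0 ≤ σ2) (U : Set ℝ) (R T : ℝ) :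
    (deltaJet σ2).IsRegular U ((re ⁻¹' {R}) ×ˢ Icc 0 T) fun p => 2 + ‖p.1‖ :=
  .const ((hasPolyGrowth_fst _ _).mul (hasPolyGrowth_bsFactor hσ R T))

theorem IsRegular.comap_fst_time {F : TwoJet (ℂ × ℝ)}
    (hF : F.IsRegular U ((re ⁻¹' {R}) ×ˢ Icc 0 T) fun p => 2 + ‖p.1‖) :
    (F.comap fun p : (ℂ × ℂ) × ℝ => (p.1.1, T - p.2)).IsRegular U
      (((re ⁻¹' {R}) ×ˢ (re ⁻¹' {R})) ×ˢ Icc 0 T) fun p => (2 + ‖p.1.1‖) * (2 + ‖p.1.2‖) :=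
  hF.comap (by fun_prop) (fun _ hp => ⟨hp.1.1, sub_mem_Icc_zero_iff_right.2 hp.2⟩) fun p _ =>
    le_mul_of_one_le_right (by positivity) (one_le_two_add_norm p.1.2)

theorem IsRegular.comap_snd_time {F : TwoJet (ℂ × ℝ)}
    (hF : F.IsRegular U ((re ⁻¹' {R}) ×ˢ Icc 0 T) fun p => 2 + ‖p.1‖) :
    (F.comap fun p : (ℂ × ℂ) × ℝ => (p.1.2, T - p.2)).IsRegular U
      (((re ⁻¹' {R}) ×ˢ (re ⁻¹' {R})) ×ˢ Icc 0 T) fun p => (2 + ‖p.1.1‖) * (2 + ‖p.1.2‖) :=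
  hF.comap (by fun_prop) (fun _ hp => ⟨hp.1.2, sub_mem_Icc_zero_iff_right.2 hp.2⟩) fun p _ =>
    le_mul_of_one_le_left (by positivity) (one_le_two_add_norm p.1.1)

theorem IsExponent.kernelJet (hk : k.IsExponent U m M) (hU : IsOpen U) (h0 : 0 ∈ Icc m M)
    (h2 : 2 ∈ Icc m M) (h2R : 2 * R ∈ Icc m M) (hσ : 0 ≤ σ2) (T : ℝ) :
    (k.kernelJet σ2 T).IsRegular U (((re ⁻¹' {R}) ×ˢ (re ⁻¹' {R})) ×ˢ Icc 0 T)
      fun p => (2 + ‖p.1.1‖) * (2 + ‖p.1.2‖) := by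
  have h1 : 1 ∈ Icc m M := ⟨by linarith [h0.1], by linarith [h2.2]⟩
  have hR : R ∈ Icc m M := ⟨by linarith [h0.1, h2R.1], by linarith [h0.2, h2R.2]⟩
  have hR1 : R + 1 ∈ Icc m M := ⟨by linarith [h2.1, h2R.1], by linarith [h2.2, h2R.2]⟩
  have hα := hk.alphaJet hU hR h1 hσ T
  have hβ := isRegular_deltaJet hσ U R T
  have hweight : ∀ y z : ℂ, 3 + ‖y‖ + ‖z‖ ≤ (2 + ‖y‖) * (2 + ‖z‖) := fun y z => by
    nlinarith [norm_nonneg y, norm_nonneg z, mul_nonneg (norm_nonneg y) (norm_nonneg z)]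
  refine ((((hk.cumulantBarJet (by fun_prop) ?_ fun p _ => ?_).mul
      (hα.comap_fst_time.mul hα.comap_snd_time)).sub
    ((hk.cumulantBarJet (by fun_prop) ?_ fun p _ => ?_).mul
      (hα.comap_fst_time.mul hβ.comap_snd_time))).sub
    ((hk.cumulantBarJet (by fun_prop) ?_ fun p _ => ?_).mul
      (hα.comap_snd_time.mul hβ.comap_fst_time))).add
    ((hk.cumulantBarJet measurable_const ?_ fun p _ => ?_).mul
      (hβ.comap_fst_time.mul hβ.comap_snd_time))
  · rintro p ⟨⟨hy : p.1.1.re = R, hz : p.1.2.re = R⟩, -⟩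
    rw [hy, hz, ← two_mul]
    exact ⟨hR, hR, h2R⟩
  · linarith [hweight p.1.1 p.1.2]
  · rintro p ⟨⟨hy : p.1.1.re = R, -⟩, -⟩
    rw [hy, one_re]
    exact ⟨hR, h1, hR1⟩
  · linarith [hweight p.1.1 p.1.2, norm_nonneg p.1.2, norm_one (α := ℂ)]
  · rintro p ⟨⟨-, hz : p.1.2.re = R⟩, -⟩
    rw [hz, one_re]
    exact ⟨hR, h1, hR1⟩
  · linarith [hweight p.1.1 p.1.2, norm_nonneg p.1.1, norm_one (α := ℂ)]
  · rw [one_re, one_add_one_eq_two]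
    exact fun _ _ => ⟨h1, h1, h2⟩
  · linarith [hweight p.1.1 p.1.2, norm_nonneg p.1.1, norm_nonneg p.1.2, norm_one (α := ℂ)]

theorem IsExponent.varianceJet (hk : k.IsExponent U m M) (hU : IsOpen U) (h0 : 0 ∈ Icc m M)
    (h2 : 2 ∈ Icc m M) (h2R : 2 * R ∈ Icc m M) (hσ : 0 ≤ σ2) (T S₀ : ℝ) :
    (k.varianceJet σ2 T S₀).IsRegular U (((re ⁻¹' {R}) ×ˢ (re ⁻¹' {R})) ×ˢ Icc 0 T)
      fun p => (2 + ‖p.1.1‖) * (2 + ‖p.1.2‖) := by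
  refine ((IsRegular.const (hasPolyGrowth_cpowR_add S₀ R _)).mul ((hk.timeExp T).comap (by fun_prop)
    (fun p hp => ⟨?_, hp.2⟩) fun p _ => ?_)).mul (hk.kernelJet hU h0 h2 h2R hσ T)
  · rw [mem_preimage, add_re_eq_two_mul hp]
    exact h2R
  · nlinarith [norm_add_le p.1.1 p.1.2, norm_nonneg p.1.1, norm_nonneg p.1.2,
      mul_nonneg (norm_nonneg p.1.1) (norm_nonneg p.1.2)]

end Regularity

end TwoJet

/-! ### Expansion at `λ = 0` -/

section ExpMean

/-- The mean of `s ↦ e^{θs}` over `[0,1]`, that is, `(e^θ - 1)/θ` continued to `θ = 0`. It unifies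
the two cases `μ + σ²/2 = 0` and `μ + σ²/2 ≠ 0` of the expansion. -/
noncomputable def expMean (θ : ℂ) : ℂ := ∫ s in (0 : ℝ)..1, Complex.exp (θ * s)

theorem hasDerivAt_exp_mul_ofReal (θ : ℂ) (s : ℝ) :
    HasDerivAt (fun s : ℝ => Complex.exp (θ * s)) (θ * Complex.exp (θ * s)) s :=
  ((hasDerivAt_id s).ofReal_comp.const_mul θ).cexp.congr_deriv (by simp [mul_comm])

theorem mul_expMean (θ : ℂ) : θ * expMean θ = Complex.exp θ - 1 := by
  rw [expMean, ← intervalIntegral.integral_const_mul,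
    intervalIntegral.integral_eq_sub_of_hasDerivAt (fun s _ => hasDerivAt_exp_mul_ofReal θ s)
      (Continuous.intervalIntegrable (by fun_prop) _ _)]
  simp

theorem mul_integral_mul_exp (θ : ℂ) :
    θ * (∫ s in (0 : ℝ)..1, (s : ℂ) * Complex.exp (θ * s)) = Complex.exp θ - expMean θ := by
  have hparts := intervalIntegral.integral_mul_deriv_eq_deriv_mul (a := 0) (b := 1)
    (u := fun s : ℝ => (s : ℂ)) (u' := fun _ => 1)
    (fun s _ => (hasDerivAt_id s).ofReal_comp) (fun s _ => hasDerivAt_exp_mul_ofReal θ s)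
    (Continuous.intervalIntegrable (by fun_prop) _ _)
    (Continuous.intervalIntegrable (by fun_prop) _ _)
  simp only [ofReal_one, ofReal_zero, mul_one, one_mul, zero_mul, sub_zero] at hparts
  rw [expMean, ← hparts, ← intervalIntegral.integral_const_mul]
  exact intervalIntegral.integral_congr fun s _ => by ring

end ExpMean

/-- The symbol of the cash gamma `D₂` at `(z,τ)`: the factor of `s^z p(z)` in its integral. -/
noncomputable def gammaSymbol (σ2 : ℝ) (p : ℂ × ℝ) : ℂ := bsFactor σ2 p * (p.1 * (p.1 - 1))

/-- The symbol of `A` at `(z,τ)`, which is also the derivative of `α` at `λ = 0` per unit of third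
cumulant. The symbol of `B` is `z` times this one. -/
noncomputable def skewSymbol (μ σ2 : ℝ) (p : ℂ × ℝ) : ℂ :=
  bsFactor σ2 p * (p.2 * (p.1 ^ 3 - p.1) * expMean ((μ + σ2 / 2) * p.1 * p.2))

/-- The symbol of `½σ²D₂ + ⅙σ⁴B`. -/
noncomputable def correctionSymbol (μ σ2 : ℝ) (p : ℂ × ℝ) : ℂ :=
  σ2 / 2 * gammaSymbol σ2 p + σ2 ^ 2 / 6 * (p.1 * skewSymbol μ σ2 p)

namespace TwoJet

/-- The 2-jet at `λ = 0` is `μz + ½σ²z² + κ₃λz³ + ½κ₄λ²z⁴`. -/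
structure IsGaussianAtZero (μ σ2 : ℝ) (κ₃ κ₄ : ℂ) (k : TwoJet ℂ) : Prop where
  val_zero : ∀ z, k.val (0, z) = μ * z + σ2 / 2 * z ^ 2
  deriv_zero : ∀ z, k.deriv (0, z) = κ₃ * z ^ 3
  deriv₂_zero : ∀ z, k.deriv₂ (0, z) = κ₄ * z ^ 4

section Zero

variable {μ σ2 T S₀ : ℝ} {κ₃ κ₄ : ℂ} {k : TwoJet ℂ}

theorem exp_gaussian_eq_bsFactor_mul (μ σ2 : ℝ) (z : ℂ) (τ : ℝ) :
    Complex.exp ((μ * z + σ2 / 2 * z ^ 2) * τ) =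
      bsFactor σ2 (z, τ) * Complex.exp ((μ + σ2 / 2) * z * τ) := by
  rw [bsFactor, bsExponent, ← Complex.exp_add]
  congr 1
  ring

theorem bsFactor_mul_bsFactor (σ2 : ℝ) (z : ℂ) (τ τ' : ℝ) :
    bsFactor σ2 (z, τ) * bsFactor σ2 (z, τ') = bsFactor σ2 (z, τ + τ') := by
  rw [bsFactor, bsFactor, bsFactor, ← Complex.exp_add, ← mul_add, ← ofReal_add]

namespace IsGaussianAtZero

theorem timeExp_val_zero (hk : k.IsGaussianAtZero μ σ2 κ₃ κ₄) (z : ℂ) (τ : ℝ) :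
    k.timeExp.val (0, (z, τ)) = bsFactor σ2 (z, τ) * Complex.exp ((μ + σ2 / 2) * z * τ) := by
  simp only [timeExp, exp, comap, const, val_mul, hk.val_zero, exp_gaussian_eq_bsFactor_mul]

theorem timeExp_deriv_zero (hk : k.IsGaussianAtZero μ σ2 κ₃ κ₄) (z : ℂ) (τ : ℝ) :
    k.timeExp.deriv (0, (z, τ)) =
      κ₃ * z ^ 3 * τ * (bsFactor σ2 (z, τ) * Complex.exp ((μ + σ2 / 2) * z * τ)) := by
  rw [← hk.timeExp_val_zero]
  simp only [timeExp, exp, comap, const, val_mul, deriv_mul, hk.deriv_zero]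
  ring

theorem alphaIntegrandJet_val_zero (hk : k.IsGaussianAtZero μ σ2 κ₃ κ₄) (z : ℂ) (τ s : ℝ) :
    (k.alphaIntegrandJet σ2).val (0, ((z, τ), s)) =
      bsFactor σ2 (z, τ) * Complex.exp ((μ + σ2 / 2) * z * τ * s) := by
  simp only [alphaIntegrandJet, comap, const, val_mul, hk.timeExp_val_zero]
  rw [mul_right_comm, bsFactor_mul_bsFactor, show τ * s + τ * (1 - s) = τ by ring, ofReal_mul,
    mul_assoc _ (τ : ℂ)]

theorem alphaIntegrandJet_deriv_zero (hk : k.IsGaussianAtZero μ σ2 κ₃ κ₄) (z : ℂ) (τ s : ℝ) :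
    (k.alphaIntegrandJet σ2).deriv (0, ((z, τ), s)) =
      bsFactor σ2 (z, τ) * κ₃ * z ^ 3 * τ * (s * Complex.exp ((μ + σ2 / 2) * z * τ * s)) := by
  have hval := hk.alphaIntegrandJet_val_zero z τ s
  simp only [alphaIntegrandJet, comap, const, val_mul, deriv_mul, hk.timeExp_deriv_zero,
    hk.timeExp_val_zero] at hval ⊢
  push_cast at hval ⊢
  linear_combination (κ₃ * z ^ 3 * (τ * s)) * hval

theorem integral_alphaIntegrandJet_val_zero (hk : k.IsGaussianAtZero μ σ2 κ₃ κ₄) (z : ℂ) (τ : ℝ) :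
    ∫ s in Ioc (0 : ℝ) 1, (k.alphaIntegrandJet σ2).val (0, ((z, τ), s)) * 1 =
      bsFactor σ2 (z, τ) * expMean ((μ + σ2 / 2) * z * τ) := by
  simp only [hk.alphaIntegrandJet_val_zero, mul_one]
  rw [integral_const_mul, expMean, intervalIntegral.integral_of_le zero_le_one]

theorem integral_alphaIntegrandJet_deriv_zero (hk : k.IsGaussianAtZero μ σ2 κ₃ κ₄) (z : ℂ)
    (τ : ℝ) :
    ∫ s in Ioc (0 : ℝ) 1, (k.alphaIntegrandJet σ2).deriv (0, ((z, τ), s)) * 1 =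
      bsFactor σ2 (z, τ) * κ₃ * z ^ 3 * τ *
        ∫ s in (0 : ℝ)..1, (s : ℂ) * Complex.exp ((μ + σ2 / 2) * z * τ * s) := by
  simp only [hk.alphaIntegrandJet_deriv_zero, mul_one]
  rw [integral_const_mul, intervalIntegral.integral_of_le zero_le_one]

theorem alphaJet_val_zero (hk : k.IsGaussianAtZero μ σ2 κ₃ κ₄) (p : ℂ × ℝ) :
    (k.alphaJet σ2).val (0, p) = bsFactor σ2 p := by
  obtain ⟨z, τ⟩ := p
  have hmean := mul_expMean ((μ + σ2 / 2) * z * τ)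
  simp only [alphaJet, comap, const, integral, val_sub, val_mul, hk.timeExp_val_zero,
    hk.val_zero, hk.integral_alphaIntegrandJet_val_zero]
  linear_combination -bsFactor σ2 (z, τ) * hmean

theorem alphaJet_deriv_zero (hk : k.IsGaussianAtZero μ σ2 κ₃ κ₄) (p : ℂ × ℝ) :
    (k.alphaJet σ2).deriv (0, p) = κ₃ * skewSymbol μ σ2 p := by
  obtain ⟨z, τ⟩ := p
  have hmul := mul_integral_mul_exp ((μ + σ2 / 2) * z * τ)
  simp only [alphaJet, comap, const, integral, deriv_sub, deriv_mul, val_mul,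
    hk.timeExp_deriv_zero, hk.val_zero, hk.deriv_zero, hk.integral_alphaIntegrandJet_val_zero,
    hk.integral_alphaIntegrandJet_deriv_zero, skewSymbol]
  linear_combination (-bsFactor σ2 (z, τ) * κ₃ * z ^ 3 * τ) * hmul

theorem cumulantBarJet_val_zero (hk : k.IsGaussianAtZero μ σ2 κ₃ κ₄) (y z : ℂ) :
    k.cumulantBarJet.val (0, (y, z)) = σ2 * y * z := by
  simp only [cumulantBarJet, comap, val_sub, hk.val_zero]
  ring

theorem cumulantBarJet_deriv_zero (hk : k.IsGaussianAtZero μ σ2 κ₃ κ₄) (y z : ℂ) :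
    k.cumulantBarJet.deriv (0, (y, z)) = 3 * κ₃ * (y * z * (y + z)) := by
  simp only [cumulantBarJet, comap, deriv_sub, hk.deriv_zero]
  ring

theorem cumulantBarJet_deriv₂_zero (hk : k.IsGaussianAtZero μ σ2 κ₃ κ₄) (y z : ℂ) :
    k.cumulantBarJet.deriv₂ (0, (y, z)) = κ₄ * ((y + z) ^ 4 - y ^ 4 - z ^ 4) := by
  simp only [cumulantBarJet, comap, deriv₂_sub, hk.deriv₂_zero]
  ring

theorem kernelJet_val_zero (hk : k.IsGaussianAtZero μ σ2 κ₃ κ₄) (p : (ℂ × ℂ) × ℝ) :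
    (k.kernelJet σ2 T).val (0, p) = 0 := by
  simp only [kernelJet, deltaJet, val_add, val_sub, val_mul, comap, const,
    hk.cumulantBarJet_val_zero, hk.alphaJet_val_zero]
  ring

theorem kernelJet_deriv_zero (hk : k.IsGaussianAtZero μ σ2 κ₃ κ₄) (p : (ℂ × ℂ) × ℝ) :
    (k.kernelJet σ2 T).deriv (0, p) = 0 := by
  simp only [kernelJet, deltaJet, deriv_add, deriv_sub, deriv_mul, val_mul, comap, const,
    hk.cumulantBarJet_val_zero, hk.cumulantBarJet_deriv_zero, hk.alphaJet_val_zero]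
  ring

theorem kernelJet_deriv₂_zero (hk : k.IsGaussianAtZero μ σ2 κ₃ κ₄) (hσ : σ2 ≠ 0)
    (p : (ℂ × ℂ) × ℝ) :
    (k.kernelJet σ2 T).deriv₂ (0, p) =
      2 * ((3 * κ₄ - 9 * κ₃ ^ 2 / σ2) *
          (gammaSymbol σ2 (p.1.1, T - p.2) * gammaSymbol σ2 (p.1.2, T - p.2)) +
        36 * κ₃ ^ 2 / σ2 ^ 3 *
          (correctionSymbol μ σ2 (p.1.1, T - p.2) * correctionSymbol μ σ2 (p.1.2, T - p.2))) := by
  have hσ' : (σ2 : ℂ) ≠ 0 := ofReal_ne_zero.2 hσ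
  simp only [kernelJet, deltaJet, deriv₂_add, deriv₂_sub, deriv₂_mul, deriv_mul, val_mul, comap,
    const, hk.cumulantBarJet_val_zero, hk.cumulantBarJet_deriv_zero, hk.cumulantBarJet_deriv₂_zero,
    hk.alphaJet_val_zero, hk.alphaJet_deriv_zero, correctionSymbol, gammaSymbol]
  field_simp
  ring

theorem varianceJet_val_zero (hk : k.IsGaussianAtZero μ σ2 κ₃ κ₄) (p : (ℂ × ℂ) × ℝ) :
    (k.varianceJet σ2 T S₀).val (0, p) = 0 := by
  simp only [varianceJet, val_mul, hk.kernelJet_val_zero, mul_zero]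

theorem varianceJet_deriv_zero (hk : k.IsGaussianAtZero μ σ2 κ₃ κ₄) (p : (ℂ × ℂ) × ℝ) :
    (k.varianceJet σ2 T S₀).deriv (0, p) = 0 := by
  simp only [varianceJet, deriv_mul, val_mul, hk.kernelJet_val_zero, hk.kernelJet_deriv_zero,
    mul_zero, add_zero]

theorem varianceJet_deriv₂_zero (hk : k.IsGaussianAtZero μ σ2 κ₃ κ₄) (p : (ℂ × ℂ) × ℝ) :
    (k.varianceJet σ2 T S₀).deriv₂ (0, p) = cpowR S₀ (p.1.1 + p.1.2) *
      Complex.exp ((μ * (p.1.1 + p.1.2) + σ2 / 2 * (p.1.1 + p.1.2) ^ 2) * p.2) *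
        (k.kernelJet σ2 T).deriv₂ (0, p) := by
  simp only [varianceJet, deriv₂_mul, deriv_mul, val_mul, hk.kernelJet_val_zero,
    hk.kernelJet_deriv_zero, mul_zero, zero_add, timeExp, exp, comap, const, hk.val_zero]

end IsGaussianAtZero

end Zero

end TwoJet

/-! ### Decay of the payoff coefficients -/

section Payoff

variable {l : ℝ → ℝ}

theorem lhat_eq_fourier (l : ℝ → ℝ) (y : ℝ) :
    lhat l y = FourierTransform.fourier (fun x => (l x : ℂ)) (y / (2 * Real.pi)) := by
  have hπ : (Real.pi : ℂ) ≠ 0 := ofReal_ne_zero.2 Real.pi_ne_zero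
  rw [Real.fourier_real_eq_integral_exp_smul, lhat]
  refine integral_congr_ae (.of_forall fun x => ?_)
  simp only [smul_eq_mul]
  rw [mul_comm]
  congr 2
  push_cast
  field_simp

theorem measurable_pCoef (hl : Continuous l) : Measurable (pCoef l) := by
  have hint : Continuous fun p : ℝ × ℝ =>
      (l p.2 : ℂ) * Complex.exp (-(Complex.I * (p.2 : ℂ) * (p.1 : ℂ))) := by fun_prop
  exact hint.stronglyMeasurable.integral_prod_right'.measurable.div_const _

theorem integrable_norm_iteratedFDeriv_ofReal_comp (hl : ContDiff ℝ (⊤ : ℕ∞) l)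
    (hint : ∀ n, Integrable (iteratedDeriv n l)) (n : ℕ) :
    Integrable fun x => ‖iteratedFDeriv ℝ n (fun x => (l x : ℂ)) x‖ := by
  refine (hint n).norm.congr (.of_forall fun x => ?_)
  have hn : (n : WithTop ℕ∞) ≤ (⊤ : ℕ∞) := by exact_mod_cast le_top
  dsimp only
  rw [← norm_iteratedFDeriv_eq_norm_iteratedDeriv]
  exact (ofRealLI.norm_iteratedFDeriv_comp_left hl.contDiffAt hn).symm

theorem exists_pow_mul_norm_lhat_le (hl : ContDiff ℝ (⊤ : ℕ∞) l)
    (hint : ∀ n, Integrable (iteratedDeriv n l)) (n : ℕ) :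
    ∃ C : ℝ, ∀ y : ℝ, ‖y‖ ^ n * ‖lhat l y‖ ≤ C := by
  obtain ⟨C, hC⟩ : ∃ C : ℝ, ∀ w : ℝ,
      ‖w‖ ^ n * ‖FourierTransform.fourier (fun x => (l x : ℂ)) w‖ ≤ C := by
    have hbound := Real.pow_mul_norm_iteratedFDeriv_fourier_le (K := 0) (N := ⊤)
      (f := fun x => (l x : ℂ)) (ofRealCLM.contDiff.comp hl)
      (fun k m hk _ => by
        obtain rfl : k = 0 := by simpa using hk
        simpa only [pow_zero, one_mul] using integrable_norm_iteratedFDeriv_ofReal_comp hl hint m)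
      (k := 0) (n := n) le_rfl le_top
    simp only [norm_iteratedFDeriv_zero] at hbound
    exact ⟨_, hbound⟩
  have hscale (y : ℝ) : ‖y‖ ^ n = (2 * Real.pi) ^ n * ‖y / (2 * Real.pi)‖ ^ n := by
    rw [norm_div, Real.norm_of_nonneg Real.two_pi_pos.le, div_pow,
      mul_div_cancel₀ _ (pow_ne_zero n Real.two_pi_pos.ne')]
  refine ⟨(2 * Real.pi) ^ n * C, fun y => ?_⟩
  rw [hscale, mul_assoc, lhat_eq_fourier]
  exact mul_le_mul_of_nonneg_left (hC _) (pow_nonneg Real.two_pi_pos.le n)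

theorem integrable_pow_mul_norm_pCoef (hl : ContDiff ℝ (⊤ : ℕ∞) l)
    (hint : ∀ n, Integrable (iteratedDeriv n l)) (N : ℕ) :
    Integrable fun y => ‖y‖ ^ N * ‖pCoef l y‖ := by
  have hbound (n : ℕ) : ∃ C : ℝ, ∀ y : ℝ, ‖y‖ ^ n * ‖pCoef l y‖ ≤ C := by
    obtain ⟨C, hC⟩ := exists_pow_mul_norm_lhat_le hl hint n
    refine ⟨C / ‖(2 * (Real.pi : ℂ))‖, fun y => ?_⟩
    rw [pCoef, norm_div, ← mul_div_assoc]
    exact div_le_div_of_nonneg_right (hC y) (norm_nonneg _)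
  obtain ⟨C₁, hC₁⟩ := hbound 0
  obtain ⟨C₂, hC₂⟩ := hbound (N + (volume : Measure ℝ).integrablePower)
  exact integrable_of_le_of_pow_mul_le (fun y => by simpa using hC₁ y) hC₂
    (measurable_pCoef hl.continuous).aestronglyMeasurable

theorem measurable_zLine (R : ℝ) : Measurable (zLine R) := by
  unfold zLine
  fun_prop

theorem norm_zLine_le (R y : ℝ) : ‖zLine R y‖ ≤ |R| + ‖y‖ := by
  simpa [zLine] using norm_add_le (R : ℂ) (y * Complex.I)

/-- A density on the line `re z = R` that integrates every power of `2 + ‖z‖`. -/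
structure IsRapidlyDecreasing (R : ℝ) (p : ℝ → ℂ) : Prop where
  measurable : Measurable p
  integrable : ∀ N : ℕ, Integrable fun y => (2 + ‖zLine R y‖) ^ N * ‖p y‖

theorem isRapidlyDecreasing_pCoef (hl : ContDiff ℝ (⊤ : ℕ∞) l)
    (hint : ∀ n, Integrable (iteratedDeriv n l)) (R : ℝ) : IsRapidlyDecreasing R (pCoef l) := by
  refine ⟨measurable_pCoef hl.continuous, fun N => ?_⟩
  have hdom := (((integrable_pow_mul_norm_pCoef hl hint 0).const_mul ((2 + |R|) ^ N)).add
    (integrable_pow_mul_norm_pCoef hl hint N)).const_mul (2 ^ (N - 1))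
  refine hdom.mono' ?_ (.of_forall fun y => ?_)
  · exact ((((measurable_zLine R).norm.const_add 2).pow_const N).mul
      (measurable_pCoef hl.continuous).norm).aestronglyMeasurable
  have hz : (2 + ‖zLine R y‖) ^ N ≤ (2 + |R| + ‖y‖) ^ N := by
    gcongr ?_ ^ N
    linarith [norm_zLine_le R y]
  calc ‖(2 + ‖zLine R y‖) ^ N * ‖pCoef l y‖‖ = (2 + ‖zLine R y‖) ^ N * ‖pCoef l y‖ :=
        Real.norm_of_nonneg (by positivity)
    _ ≤ 2 ^ (N - 1) * ((2 + |R|) ^ N + ‖y‖ ^ N) * ‖pCoef l y‖ := by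
        gcongr
        exact hz.trans (add_pow_le (by positivity) (norm_nonneg y) N)
    _ = _ := by
        simp only [Pi.add_apply]
        ring

end Payoff

/-! ### Integrals along the line `re z = R` -/

section Line

variable {R T : ℝ} {p : ℝ → ℂ}

/-- The line `re z = R` twice, together with time: the domain of the variance integral. -/
noncomputable def linePair (R : ℝ) (x : (ℝ × ℝ) × ℝ) : (ℂ × ℂ) × ℝ :=
  ((zLine R x.1.1, zLine R x.1.2), x.2)

/-- Lebesgue measure `du dv dt` on `ℝ × ℝ × (0,T]`. -/
noncomputable def pairTimeMeasure (T : ℝ) : Measure ((ℝ × ℝ) × ℝ) :=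
  ((volume : Measure ℝ).prod (volume : Measure ℝ)).prod (volume.restrict (Ioc 0 T))

instance (T : ℝ) : SFinite (pairTimeMeasure T) :=
  inferInstanceAs (SFinite (((volume : Measure ℝ).prod volume).prod (volume.restrict (Ioc 0 T))))

theorem measurable_linePair (R : ℝ) : Measurable (linePair R) := by
  have := measurable_zLine R
  unfold linePair
  fun_prop

theorem ae_linePair_mem (R T : ℝ) :
    ∀ᵐ x ∂pairTimeMeasure T, linePair R x ∈ ((re ⁻¹' {R}) ×ˢ (re ⁻¹' {R})) ×ˢ Icc 0 T := by
  have htime : ∀ᵐ x ∂pairTimeMeasure T, x.2 ∈ Ioc 0 T :=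
    Measure.quasiMeasurePreserving_snd.ae (ae_restrict_mem measurableSet_Ioc)
  filter_upwards [htime] with x hx
  exact ⟨⟨zLine_re R _, zLine_re R _⟩, Ioc_subset_Icc_self hx⟩

namespace IsRapidlyDecreasing

theorem integrable_mul {G : ℂ → ℂ} (hp : IsRapidlyDecreasing R p)
    (hG : HasPolyGrowth (re ⁻¹' {R}) (fun z => 2 + ‖z‖) G) :
    Integrable fun y => G (zLine R y) * p y :=
  (hG.comp (measurable_zLine R) (fun _ _ => zLine_re R _) fun _ _ => le_rfl).integrable_mul
    (A := univ) (.of_forall fun _ => trivial) hp.measurable hp.integrable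

theorem integrable_pair (hp : IsRapidlyDecreasing R p) (T : ℝ) (N : ℕ) :
    Integrable (fun x : (ℝ × ℝ) × ℝ =>
      ((2 + ‖zLine R x.1.1‖) * (2 + ‖zLine R x.1.2‖)) ^ N * ‖p x.1.1 * p x.1.2‖)
      (pairTimeMeasure T) := by
  refine (((hp.integrable N).mul_prod (hp.integrable N)).comp_fst _).congr (.of_forall fun x => ?_)
  simp only [norm_mul, mul_pow]
  ring

theorem integrable_linePair_mul {G : (ℂ × ℂ) × ℝ → ℂ} (hp : IsRapidlyDecreasing R p)
    (hG : HasPolyGrowth (((re ⁻¹' {R}) ×ˢ (re ⁻¹' {R})) ×ˢ Icc 0 T)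
      (fun q => (2 + ‖q.1.1‖) * (2 + ‖q.1.2‖)) G) :
    Integrable (fun x => G (linePair R x) * (p x.1.1 * p x.1.2)) (pairTimeMeasure T) :=
  have hm := hp.measurable
  (hG.comp (A' := linePair R ⁻¹' _) (measurable_linePair R) (mapsTo_preimage _ _)
    fun _ _ => le_rfl).integrable_mul (ae_linePair_mem R T) (by fun_prop) (hp.integrable_pair T)

theorem integral_linePair_mul {G : (ℂ × ℂ) × ℝ → ℂ} (hp : IsRapidlyDecreasing R p) (hT : 0 ≤ T)
    (hG : HasPolyGrowth (((re ⁻¹' {R}) ×ˢ (re ⁻¹' {R})) ×ˢ Icc 0 T)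
      (fun q => (2 + ‖q.1.1‖) * (2 + ‖q.1.2‖)) G) :
    ∫ x, G (linePair R x) * (p x.1.1 * p x.1.2) ∂pairTimeMeasure T =
      ∫ u, ∫ v, ∫ t in (0 : ℝ)..T, G ((zLine R u, zLine R v), t) * p u * p v := by
  have hint := hp.integrable_linePair_mul hG
  rw [pairTimeMeasure, integral_prod _ hint, integral_prod _ hint.integral_prod_left]
  simp only [linePair, intervalIntegral.integral_of_le hT, mul_assoc]

theorem integral_linePair_mul_symm {G : (ℂ × ℂ) × ℝ → ℂ} (hp : IsRapidlyDecreasing R p)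
    (hT : 0 ≤ T) (hG : HasPolyGrowth (((re ⁻¹' {R}) ×ˢ (re ⁻¹' {R})) ×ˢ Icc 0 T)
      (fun q => (2 + ‖q.1.1‖) * (2 + ‖q.1.2‖)) G) :
    ∫ x, G (linePair R x) * (p x.1.1 * p x.1.2) ∂pairTimeMeasure T =
      ∫ t in (0 : ℝ)..T, ∫ y : ℝ × ℝ, G ((zLine R y.1, zLine R y.2), t) * (p y.1 * p y.2) := by
  rw [pairTimeMeasure, integral_prod_symm _ (hp.integrable_linePair_mul hG),
    intervalIntegral.integral_of_le hT]
  rfl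

end IsRapidlyDecreasing

end Line

/-! ### The jet of the hedging error -/

namespace TwoJet

variable {σ2 T S₀ R : ℝ} {l : ℝ → ℝ} {m M : ℝ} {U : Set ℝ} {k : TwoJet ℂ}

/-- The jet of `hedgeCapital`. -/
noncomputable def capitalJet (σ2 T S₀ R : ℝ) (p : ℝ → ℂ) (k : TwoJet ℂ) : TwoJet Unit :=
  ((const (fun q : ℂ × ℝ => cpowR S₀ q.1) * k.alphaJet σ2).comap
    fun y : Unit × ℝ => (zLine R y.2, T)).integral volume p

/-- The jet of `hedgeVariance`. -/
noncomputable def varianceIntegralJet (σ2 T S₀ R : ℝ) (p : ℝ → ℂ) (k : TwoJet ℂ) : TwoJet Unit :=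
  ((k.varianceJet σ2 T S₀).comap
    fun y : Unit × ((ℝ × ℝ) × ℝ) => linePair R y.2).integral (pairTimeMeasure T)
      fun x => p x.1.1 * p x.1.2

/-- The jet of `hedgeError`. -/
noncomputable def errorJet (σ2 T S₀ R : ℝ) (l : ℝ → ℝ) (k : TwoJet ℂ) : TwoJet Unit :=
  (k.capitalJet σ2 T S₀ R (pCoef l) - const fun _ => bsPrice σ2 T S₀ R l) *
      (k.capitalJet σ2 T S₀ R (pCoef l) - const fun _ => bsPrice σ2 T S₀ R l) +
    k.varianceIntegralJet σ2 T S₀ R (pCoef l)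

variable {p : ℝ → ℂ}

theorem IsExponent.capitalJet (hk : k.IsExponent U m M) (hU : IsOpen U) (hR : R ∈ Icc m M)
    (h1 : 1 ∈ Icc m M) (hσ : 0 ≤ σ2) (hT : 0 ≤ T) (S₀ : ℝ) (hp : IsRapidlyDecreasing R p) :
    (k.capitalJet σ2 T S₀ R p).IsRegular U univ fun _ => 1 := by
  have hz := measurable_zLine R
  refine IsRegular.integral (A₂ := univ) (ρ₂ := fun y => 2 + ‖zLine R y.2‖)
    (r := fun y => 2 + ‖zLine R y‖) ?_ hU hp.measurable (fun _ _ => le_rfl)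
    (fun _ _ => .of_forall fun _ => ⟨trivial, (one_mul _).ge⟩) hp.integrable
  exact ((IsRegular.const (hasPolyGrowth_cpowR S₀ R _)).mul
    (hk.alphaJet hU hR h1 hσ T)).comap (by fun_prop)
      (fun y _ => ⟨zLine_re R y.2, hT, le_rfl⟩) fun _ _ => le_rfl

theorem IsExponent.varianceIntegralJet (hk : k.IsExponent U m M) (hU : IsOpen U) (h0 : 0 ∈ Icc m M)
    (h2 : 2 ∈ Icc m M) (h2R : 2 * R ∈ Icc m M) (hσ : 0 ≤ σ2) (T S₀ : ℝ)
    (hp : IsRapidlyDecreasing R p) :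
    (k.varianceIntegralJet σ2 T S₀ R p).IsRegular U univ fun _ => 1 := by
  have hm := hp.measurable
  refine IsRegular.integral (A₂ := (fun y => linePair R y.2) ⁻¹' _)
    (ρ₂ := fun y => (2 + ‖zLine R y.2.1.1‖) * (2 + ‖zLine R y.2.1.2‖))
    (r := fun x => (2 + ‖zLine R x.1.1‖) * (2 + ‖zLine R x.1.2‖))
    ((hk.varianceJet hU h0 h2 h2R hσ T S₀).comap ((measurable_linePair R).comp measurable_snd)
      (mapsTo_preimage _ _) fun _ _ => le_rfl) hU (by fun_prop) (fun _ _ => le_rfl)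
    (fun _ _ => ?_) (hp.integrable_pair T)
  filter_upwards [ae_linePair_mem R T] with x hx using ⟨hx, (one_mul _).ge⟩

theorem IsExponent.errorJet (hk : k.IsExponent U m M) (hU : IsOpen U) (h0 : 0 ∈ Icc m M)
    (h2 : 2 ∈ Icc m M) (h2R : 2 * R ∈ Icc m M) (hσ : 0 ≤ σ2) (hT : 0 ≤ T) (S₀ : ℝ)
    (hp : IsRapidlyDecreasing R (pCoef l)) :
    (k.errorJet σ2 T S₀ R l).IsRegular U univ fun _ => 1 := by
  have hcap := (hk.capitalJet hU ⟨by linarith [h0.1, h2R.1], by linarith [h0.2, h2R.2]⟩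
    ⟨by linarith [h0.1], by linarith [h2.2]⟩ hσ hT S₀ hp).sub
      (.const (.const (fun _ _ => le_rfl) (bsPrice σ2 T S₀ R l)))
  exact (hcap.mul hcap).add (hk.varianceIntegralJet hU h0 h2 h2R hσ T S₀ hp)

theorem IsExponent.val_errorJet (hk : k.IsExponent U m M) (hU : IsOpen U) (h0 : 0 ∈ Icc m M)
    (h2 : 2 ∈ Icc m M) (h2R : 2 * R ∈ Icc m M) (hσ : 0 ≤ σ2) (hT : 0 ≤ T) (S₀ : ℝ)
    (hp : IsRapidlyDecreasing R (pCoef l)) {x : ℝ} (hx : x ∈ U) :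
    (k.errorJet σ2 T S₀ R l).val (x, ()) =
      hedgeError σ2 T S₀ R l fun z => k.val (x, z) := by
  have hcapital : (k.capitalJet σ2 T S₀ R (pCoef l)).val (x, ()) =
      hedgeCapital σ2 T S₀ R l fun z => k.val (x, z) := by
    simp only [TwoJet.capitalJet, integral, comap, const, val_mul, hedgeCapital, ← val_alphaJet,
      sub_zero]
  have hvariance : (k.varianceIntegralJet σ2 T S₀ R (pCoef l)).val (x, ()) =
      hedgeVariance σ2 T S₀ R l fun z => k.val (x, z) := by
    simp only [TwoJet.varianceIntegralJet, integral, comap]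
    rw [hp.integral_linePair_mul (G := fun q => (k.varianceJet σ2 T S₀).val (x, q)) hT
      ((hk.varianceJet hU h0 h2 h2R hσ T S₀).val_growth.comp (by fun_prop)
        (fun q hq => ⟨hx, hq⟩) fun _ _ => le_rfl)]
    simp only [hedgeVariance, TwoJet.varianceJet, val_mul, ← val_kernelJet, TwoJet.timeExp, exp,
      comap, const]
  simp only [TwoJet.errorJet, val_add, val_mul, val_sub, hcapital, hvariance, const, hedgeError, sq]

theorem IsExponent.eqOn_hedgeError (hk : k.IsExponent U m M) (hU : IsOpen U) (h0 : 0 ∈ Icc m M)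
    (h2 : 2 ∈ Icc m M) (h2R : 2 * R ∈ Icc m M) (hσ : 0 ≤ σ2) (hT : 0 ≤ T) (S₀ : ℝ)
    (hp : IsRapidlyDecreasing R (pCoef l)) {κ : ℝ → ℂ → ℂ}
    (hκ : ∀ x ∈ U, EqOn (κ x) (fun z => k.val (x, z)) (re ⁻¹' Icc m M)) :
    EqOn (fun x => hedgeError σ2 T S₀ R l (κ x))
      (fun x => (k.errorJet σ2 T S₀ R l).val (x, ())) U := fun x hx =>
  (hedgeError_congr h0 h2 h2R (hκ x hx) σ2 T S₀ l).trans
    (hk.val_errorJet hU h0 h2 h2R hσ hT S₀ hp hx).symm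

end TwoJet

/-! ### Gaussian second moments of claim values -/

section Claim

/-- The value `∫ G(z,τ) s^z p(z) dy` over the line `re z = R` of the claim with coefficients `p` and
symbol `G`, at spot price `s` and time to maturity `τ`. -/
noncomputable def claimValue (R : ℝ) (p : ℝ → ℂ) (G : ℂ × ℝ → ℂ) (τ s : ℝ) : ℂ :=
  ∫ y, G (zLine R y, τ) * p y * cpowR s (zLine R y)

/-- The mean of `S_t^{y+z}`, at `((y,z),t)`, for the geometric Brownian motion `S₀e^{μt+x}` with
`x` centered Gaussian of variance `σ²t`. -/
noncomputable def gaussianKernel (μ σ2 S₀ : ℝ) (q : (ℂ × ℂ) × ℝ) : ℂ :=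
  cpowR S₀ (q.1.1 + q.1.2) *
    Complex.exp ((μ * (q.1.1 + q.1.2) + σ2 / 2 * (q.1.1 + q.1.2) ^ 2) * q.2)

variable {s R T : ℝ} {p : ℝ → ℂ}

theorem integral_cpowR_gaussianReal (hs : 0 < s) (d : ℝ) (v : NNReal) (z : ℂ) :
    ∫ x, cpowR (s * Real.exp (d + x)) z ∂gaussianReal 0 v =
      cpowR s z * Complex.exp (d * z + v / 2 * z ^ 2) := by
  have hmgf : ∫ x : ℝ, Complex.exp (z * x) ∂gaussianReal 0 v = Complex.exp (v / 2 * z ^ 2) := by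
    have := complexMGF_id_gaussianReal (μ := 0) (v := v) z
    rw [complexMGF] at this
    simp only [id_eq] at this
    rw [this, ofReal_zero, mul_zero, zero_add]
    congr 1
    ring
  simp only [cpowR_mul_exp hs, ofReal_add, mul_add, Complex.exp_add, ← mul_assoc]
  rw [integral_const_mul, hmgf, mul_comm z]

theorem integrable_cpowR_gaussianReal_prod (hs : 0 < s) (d : ℝ) (v : NNReal) {f : ℝ × ℝ → ℂ}
    (hf : Integrable f) :
    Integrable (fun w : ℝ × (ℝ × ℝ) =>
      f w.2 * cpowR (s * Real.exp (d + w.1)) (zLine R w.2.1 + zLine R w.2.2))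
      ((gaussianReal 0 v).prod volume) := by
  have hz := measurable_zLine R
  have hexp : Integrable (fun x => Real.exp (2 * R * x)) (gaussianReal 0 v) :=
    integrable_exp_mul_gaussianReal _
  refine ((hexp.mul_prod hf.norm).const_mul (Real.exp (2 * R * (Real.log s + d)))).mono'
    (hf.aestronglyMeasurable.comp_snd.mul ?_) (.of_forall fun w => le_of_eq ?_)
  · unfold cpowR
    fun_prop
  · rw [norm_mul, norm_cpowR, add_re, zLine_re, zLine_re,
      Real.log_mul hs.ne' (Real.exp_ne_zero _), Real.log_exp, ← two_mul, ← add_assoc, mul_add,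
      Real.exp_add]
    ring

theorem integral_sq_gaussianReal (hs : 0 < s) (d : ℝ) (v : NNReal) {g : ℝ → ℂ}
    (hg : Integrable g) :
    ∫ x, (∫ y, g y * cpowR (s * Real.exp (d + x)) (zLine R y)) ^ 2 ∂gaussianReal 0 v =
      ∫ y : ℝ × ℝ, g y.1 * g y.2 * (cpowR s (zLine R y.1 + zLine R y.2) *
        Complex.exp (d * (zLine R y.1 + zLine R y.2) +
          v / 2 * (zLine R y.1 + zLine R y.2) ^ 2)) := by
  have hsq (x : ℝ) : (∫ y, g y * cpowR (s * Real.exp (d + x)) (zLine R y)) ^ 2 =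
      ∫ y : ℝ × ℝ, g y.1 * g y.2 *
        cpowR (s * Real.exp (d + x)) (zLine R y.1 + zLine R y.2) := by
    rw [sq, ← integral_prod_mul]
    simp only [cpowR_add, mul_mul_mul_comm]
    rfl
  simp only [hsq]
  rw [integral_integral_swap (integrable_cpowR_gaussianReal_prod hs d v (hg.mul_prod hg))]
  simp only [integral_const_mul, integral_cpowR_gaussianReal hs]

theorem hasPolyGrowth_gaussianKernel {σ2 : ℝ} (hσ : 0 ≤ σ2) (μ S₀ R T : ℝ) :
    HasPolyGrowth (((re ⁻¹' {R}) ×ˢ (re ⁻¹' {R})) ×ˢ Icc 0 T)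
      (fun q => (2 + ‖q.1.1‖) * (2 + ‖q.1.2‖)) (gaussianKernel μ σ2 S₀) := by
  refine (hasPolyGrowth_cpowR_add S₀ R _).mul (.exp (by fun_prop)
    (fun q _ => one_le_two_add_norm_mul q.1.1 q.1.2)
    (B := |μ * (2 * R) + σ2 / 2 * (2 * R) ^ 2| * T) fun q hq => re_mul_ofReal_le ?_ hq.2)
  have hsq : ((q.1.1 + q.1.2) ^ 2).re ≤ (2 * R) ^ 2 := by
    rw [sq, mul_re, add_re_eq_two_mul hq]
    nlinarith [mul_self_nonneg (q.1.1 + q.1.2).im]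
  rw [show (σ2 : ℂ) / 2 = ((σ2 / 2 : ℝ) : ℂ) by push_cast; rfl, add_re, re_ofReal_mul,
    re_ofReal_mul, add_re_eq_two_mul hq]
  gcongr

variable {G : ℂ × ℝ → ℂ}

theorem HasPolyGrowth.slice {τ : ℝ} (hG : HasPolyGrowth ((re ⁻¹' {R}) ×ˢ Icc 0 T)
    (fun q => 2 + ‖q.1‖) G) (hτ : τ ∈ Icc 0 T) :
    HasPolyGrowth (re ⁻¹' {R}) (fun z => 2 + ‖z‖) fun z => G (z, τ) :=
  hG.comp (by fun_prop) (fun _ hz => ⟨hz, hτ⟩) fun _ _ => le_rfl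

theorem HasPolyGrowth.mul_reversed (hG : HasPolyGrowth ((re ⁻¹' {R}) ×ˢ Icc 0 T)
    (fun q => 2 + ‖q.1‖) G) :
    HasPolyGrowth (((re ⁻¹' {R}) ×ˢ (re ⁻¹' {R})) ×ˢ Icc 0 T)
      (fun q => (2 + ‖q.1.1‖) * (2 + ‖q.1.2‖))
      fun q => G (q.1.1, T - q.2) * G (q.1.2, T - q.2) := by
  have hfst := hG.comp (φ := fun q : (ℂ × ℂ) × ℝ => (q.1.1, T - q.2))
    (A' := ((re ⁻¹' {R}) ×ˢ (re ⁻¹' {R})) ×ˢ Icc 0 T) (by fun_prop)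
    (fun q hq => ⟨hq.1.1, sub_mem_Icc_zero_iff_right.2 hq.2⟩)
    fun q _ => le_mul_of_one_le_right (by positivity) (one_le_two_add_norm q.1.2)
  have hsnd := hG.comp (φ := fun q : (ℂ × ℂ) × ℝ => (q.1.2, T - q.2))
    (A' := ((re ⁻¹' {R}) ×ˢ (re ⁻¹' {R})) ×ˢ Icc 0 T) (by fun_prop)
    (fun q hq => ⟨hq.1.2, sub_mem_Icc_zero_iff_right.2 hq.2⟩)
    fun q _ => le_mul_of_one_le_left (by positivity) (one_le_two_add_norm q.1.1)
  exact hfst.mul hsnd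

theorem IsRapidlyDecreasing.integral_gaussianKernel_mul {μ σ2 : ℝ} (hp : IsRapidlyDecreasing R p)
    (hσ : 0 ≤ σ2) (hT : 0 ≤ T) (hs : 0 < s)
    (hG : HasPolyGrowth ((re ⁻¹' {R}) ×ˢ Icc 0 T) (fun q => 2 + ‖q.1‖) G) :
    ∫ x, gaussianKernel μ σ2 s (linePair R x) *
        (G (zLine R x.1.1, T - x.2) * G (zLine R x.1.2, T - x.2)) * (p x.1.1 * p x.1.2)
        ∂pairTimeMeasure T =
      ∫ t in (0 : ℝ)..T, ∫ x, claimValue R p G (T - t) (s * Real.exp (μ * t + x)) ^ 2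
        ∂gaussianReal 0 (Real.toNNReal (σ2 * t)) := by
  refine (hp.integral_linePair_mul_symm hT
    ((hasPolyGrowth_gaussianKernel hσ μ s R T).mul hG.mul_reversed)).trans ?_
  refine intervalIntegral.integral_congr fun t ht => ?_
  rw [uIcc_of_le hT] at ht
  have hτ : T - t ∈ Icc 0 T := sub_mem_Icc_zero_iff_right.2 ht
  simp only [claimValue, integral_sq_gaussianReal hs _ _ (hp.integrable_mul (hG.slice hτ)),
    Real.coe_toNNReal _ (mul_nonneg hσ ht.1), gaussianKernel]
  refine integral_congr_ae (.of_forall fun y => ?_)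
  have hexp : (μ * (zLine R y.1 + zLine R y.2) + σ2 / 2 * (zLine R y.1 + zLine R y.2) ^ 2) * t =
      (μ * t : ℝ) * (zLine R y.1 + zLine R y.2) +
        (σ2 * t : ℝ) / 2 * (zLine R y.1 + zLine R y.2) ^ 2 := by
    push_cast
    ring
  simp only [hexp]
  ring

end Claim

/-! ### Greeks as claim values -/

section ClaimValue

variable {R T : ℝ} {p : ℝ → ℂ} {F G : ℂ × ℝ → ℂ} {τ : ℝ}

theorem IsRapidlyDecreasing.integrable_claimValue (hp : IsRapidlyDecreasing R p)
    (hG : HasPolyGrowth ((re ⁻¹' {R}) ×ˢ Icc 0 T) (fun q => 2 + ‖q.1‖) G) (hτ : τ ∈ Icc 0 T)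
    (s : ℝ) : Integrable fun y => G (zLine R y, τ) * p y * cpowR s (zLine R y) :=
  (hp.integrable_mul ((hG.mul (hasPolyGrowth_cpowR s R _)).slice hτ)).congr
    (.of_forall fun _ => mul_right_comm _ _ _)

theorem claimValue_const_mul (c : ℂ) (s : ℝ) :
    claimValue R p (fun q => c * G q) τ s = c * claimValue R p G τ s := by
  simp only [claimValue, mul_assoc, integral_const_mul]

theorem claimValue_add (hp : IsRapidlyDecreasing R p)
    (hF : HasPolyGrowth ((re ⁻¹' {R}) ×ˢ Icc 0 T) (fun q => 2 + ‖q.1‖) F)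
    (hG : HasPolyGrowth ((re ⁻¹' {R}) ×ˢ Icc 0 T) (fun q => 2 + ‖q.1‖) G) (hτ : τ ∈ Icc 0 T)
    (s : ℝ) : claimValue R p (fun q => F q + G q) τ s =
      claimValue R p F τ s + claimValue R p G τ s := by
  simp only [claimValue, add_mul]
  exact integral_add (hp.integrable_claimValue hF hτ s) (hp.integrable_claimValue hG hτ s)

theorem claimValue_sub (hp : IsRapidlyDecreasing R p)
    (hF : HasPolyGrowth ((re ⁻¹' {R}) ×ˢ Icc 0 T) (fun q => 2 + ‖q.1‖) F)
    (hG : HasPolyGrowth ((re ⁻¹' {R}) ×ˢ Icc 0 T) (fun q => 2 + ‖q.1‖) G) (hτ : τ ∈ Icc 0 T)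
    (s : ℝ) : claimValue R p (fun q => F q - G q) τ s =
      claimValue R p F τ s - claimValue R p G τ s := by
  simp only [claimValue, sub_mul]
  exact integral_sub (hp.integrable_claimValue hF hτ s) (hp.integrable_claimValue hG hτ s)

theorem claimValue_congr (h : ∀ z, F (z, τ) = G (z, τ)) (s : ℝ) :
    claimValue R p F τ s = claimValue R p G τ s := by
  simp only [claimValue, h]

theorem claimValue_mul_exp {s : ℝ} (hs : 0 < s) (θ : ℝ) :
    claimValue R p G τ (s * Real.exp (θ * τ)) =
      claimValue R p (fun q => G q * Complex.exp (θ * q.1 * q.2)) τ s := by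
  refine integral_congr_ae (.of_forall fun y => ?_)
  simp only [cpowR_mul_exp hs, ofReal_mul, mul_left_comm _ (θ : ℂ) (τ : ℂ), mul_assoc]
  ring

end ClaimValue

section Greeks

variable {μ σ2 R T τ : ℝ} {p : ℝ → ℂ} {G : ℂ × ℝ → ℂ}

theorem expMean_zero : expMean 0 = 1 := by simp [expMean]

theorem measurable_expMean : Measurable expMean := by
  have hexp : Continuous fun q : ℂ × ℝ => Complex.exp (q.1 * q.2) := by fun_prop
  have hmean : expMean = fun θ => ∫ x in Ioc (0 : ℝ) 1, Complex.exp (θ * x) :=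
    funext fun θ => intervalIntegral.integral_of_le zero_le_one
  exact hmean ▸ hexp.stronglyMeasurable.integral_prod_right'.measurable

theorem norm_expMean_le {θ : ℂ} {B : ℝ} (hB : 0 ≤ B) (hθ : θ.re ≤ B) :
    ‖expMean θ‖ ≤ Real.exp B := by
  have hle : ‖expMean θ‖ ≤ Real.exp B * |1 - 0| :=
    intervalIntegral.norm_integral_le_of_norm_le_const fun s hs => by
      rw [uIoc_of_le zero_le_one] at hs
      rw [Complex.norm_exp, re_mul_ofReal, Real.exp_le_exp]
      nlinarith [hs.1, hs.2]
  simpa using hle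

theorem hasPolyGrowth_expMean (θ R T : ℝ) :
    HasPolyGrowth ((re ⁻¹' {R}) ×ˢ Icc 0 T) (fun q => 2 + ‖q.1‖)
      fun q => expMean (θ * q.1 * q.2) :=
  .of_norm_le (measurable_expMean.comp (by fun_prop)) (fun q _ => one_le_two_add_norm q.1)
    (Real.exp (|θ * R| * T)) 0 fun q hq => by
      have hT : 0 ≤ T := hq.2.1.trans hq.2.2
      have hre : (θ * q.1).re ≤ θ * R := by rw [re_ofReal_mul, show q.1.re = R from hq.1]
      rw [pow_zero, mul_one]
      exact norm_expMean_le (by positivity) (re_mul_ofReal_le hre hq.2)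

theorem hasPolyGrowth_exp_mul (θ R T : ℝ) :
    HasPolyGrowth ((re ⁻¹' {R}) ×ˢ Icc 0 T) (fun q => 2 + ‖q.1‖)
      fun q => Complex.exp (θ * q.1 * q.2) :=
  .exp (by fun_prop) (fun q _ => one_le_two_add_norm q.1) fun q hq =>
    re_mul_ofReal_le (by rw [re_ofReal_mul, show q.1.re = R from hq.1]) hq.2

theorem claimValue_mul_exp_sub_div (hp : IsRapidlyDecreasing R p)
    (hG : HasPolyGrowth ((re ⁻¹' {R}) ×ˢ Icc 0 T) (fun q => 2 + ‖q.1‖) G) (hτ : τ ∈ Icc 0 T)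
    {s : ℝ} (hs : 0 < s) {θ : ℝ} (hθ : θ ≠ 0) :
    (claimValue R p G τ (s * Real.exp (θ * τ)) - claimValue R p G τ s) / θ =
      claimValue R p (fun q => q.2 * (q.1 * G q * expMean (θ * q.1 * q.2))) τ s := by
  have hθ' : (θ : ℂ) ≠ 0 := ofReal_ne_zero.2 hθ
  rw [div_eq_iff hθ', claimValue_mul_exp hs,
    ← claimValue_sub hp (hG.mul (hasPolyGrowth_exp_mul θ R T)) hG hτ, mul_comm,
    ← claimValue_const_mul]
  refine claimValue_congr (fun z => ?_) s
  linear_combination -G (z, τ) * mul_expMean (θ * z * τ)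

/-- The symbol `z(z-1)⋯(z-n+1)e^{½σ²z(z-1)τ}` of the cash greek `D_n`. -/
noncomputable def greekSymbol (σ2 : ℝ) (n : ℕ) (q : ℂ × ℝ) : ℂ :=
  (∏ k ∈ Finset.range n, (q.1 - k)) * bsFactor σ2 q

theorem hasPolyGrowth_greekSymbol (hσ : 0 ≤ σ2) (R T : ℝ) (n : ℕ) :
    HasPolyGrowth ((re ⁻¹' {R}) ×ˢ Icc 0 T) (fun q => 2 + ‖q.1‖) (greekSymbol σ2 n) :=
  have hone (q : ℂ × ℝ) (_ : q ∈ (re ⁻¹' {R}) ×ˢ Icc 0 T) : 1 ≤ 2 + ‖q.1‖ :=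
    one_le_two_add_norm q.1
  (HasPolyGrowth.prod (s := Finset.range n) hone fun k _ =>
    (hasPolyGrowth_fst _ _).sub (.const hone (k : ℂ))).mul (hasPolyGrowth_bsFactor hσ R T)

theorem greekSymbol_two : greekSymbol σ2 2 = gammaSymbol σ2 := by
  ext q
  simp [greekSymbol, gammaSymbol, Finset.prod_range_succ, mul_comm]

theorem hasPolyGrowth_gammaSymbol (hσ : 0 ≤ σ2) (R T : ℝ) :
    HasPolyGrowth ((re ⁻¹' {R}) ×ˢ Icc 0 T) (fun q => 2 + ‖q.1‖) (gammaSymbol σ2) :=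
  greekSymbol_two ▸ hasPolyGrowth_greekSymbol hσ R T 2

theorem hasPolyGrowth_skewSymbol (hσ : 0 ≤ σ2) (μ R T : ℝ) :
    HasPolyGrowth ((re ⁻¹' {R}) ×ˢ Icc 0 T) (fun q => 2 + ‖q.1‖) (skewSymbol μ σ2) := by
  have hmean := hasPolyGrowth_expMean (μ + σ2 / 2) R T
  push_cast at hmean
  have hz := hasPolyGrowth_fst (re ⁻¹' {R}) (Icc 0 T)
  exact (hasPolyGrowth_bsFactor hσ R T).mul
    (((hasPolyGrowth_snd _ T).mul ((hz.pow 3).sub hz)).mul hmean)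

theorem hasPolyGrowth_correctionSymbol (hσ : 0 ≤ σ2) (μ R T : ℝ) :
    HasPolyGrowth ((re ⁻¹' {R}) ×ˢ Icc 0 T) (fun q => 2 + ‖q.1‖) (correctionSymbol μ σ2) :=
  ((hasPolyGrowth_gammaSymbol hσ R T).const_mul _).add
    (((hasPolyGrowth_fst _ _).mul (hasPolyGrowth_skewSymbol hσ μ R T)).const_mul _)

variable {l : ℝ → ℝ} {t : ℝ}

theorem cashGreek_eq_claimValue (n : ℕ) (t s : ℝ) :
    cashGreek σ2 T R l n t s = claimValue R (pCoef l) (greekSymbol σ2 n) (T - t) s := by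
  refine integral_congr_ae (.of_forall fun y => ?_)
  simp only [greekSymbol, bsFactor, bsExponent]
  push_cast
  ring

theorem cashGreek_two_eq_claimValue (t s : ℝ) :
    cashGreek σ2 T R l 2 t s = claimValue R (pCoef l) (gammaSymbol σ2) (T - t) s := by
  rw [cashGreek_eq_claimValue, greekSymbol_two]

theorem Atil_eq_claimValue (hp : IsRapidlyDecreasing R (pCoef l)) (hσ : 0 ≤ σ2)
    (ht : T - t ∈ Icc 0 T) (s : ℝ) :
    Atil σ2 T R l t s =
      claimValue R (pCoef l) (fun q => (q.1 ^ 2 - 1) * bsFactor σ2 q) (T - t) s := by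
  have hgrowth := hasPolyGrowth_greekSymbol hσ R T
  simp only [Atil, cashGreek_eq_claimValue]
  rw [← claimValue_add hp (hgrowth 2) (hgrowth 1) ht,
    ← claimValue_sub hp ((hgrowth 2).add (hgrowth 1)) (hgrowth 0) ht]
  refine claimValue_congr (fun z => ?_) s
  simp only [greekSymbol, Finset.prod_range_succ, Finset.prod_range_zero]
  push_cast
  ring

theorem Btil_eq_claimValue (hp : IsRapidlyDecreasing R (pCoef l)) (hσ : 0 ≤ σ2)
    (ht : T - t ∈ Icc 0 T) (s : ℝ) :
    Btil σ2 T R l t s =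
      claimValue R (pCoef l) (fun q => (q.1 ^ 3 - q.1) * bsFactor σ2 q) (T - t) s := by
  have hgrowth := hasPolyGrowth_greekSymbol hσ R T
  simp only [Btil, cashGreek_eq_claimValue]
  rw [← claimValue_const_mul, ← claimValue_add hp (hgrowth 3) ((hgrowth 2).const_mul 3) ht]
  refine claimValue_congr (fun z => ?_) s
  simp only [greekSymbol, Finset.prod_range_succ, Finset.prod_range_zero]
  push_cast
  ring

theorem Afun_eq_claimValue (hp : IsRapidlyDecreasing R (pCoef l)) (hσ : 0 ≤ σ2)
    (ht : T - t ∈ Icc 0 T) {s : ℝ} (hs : 0 < s) :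
    Afun μ σ2 T R l t s = claimValue R (pCoef l) (skewSymbol μ σ2) (T - t) s := by
  have hgrowth := hasPolyGrowth_greekSymbol hσ R T
  have hz := hasPolyGrowth_fst (re ⁻¹' {R}) (Icc 0 T)
  rw [Afun]
  split_ifs with hθ
  · simp only [cashGreek_eq_claimValue]
    rw [← claimValue_const_mul, ← claimValue_add hp (hgrowth 3) ((hgrowth 2).const_mul 3) ht,
      ← claimValue_const_mul]
    refine claimValue_congr (fun z => ?_) s
    have hθ' : (μ : ℂ) + σ2 / 2 = 0 := by exact_mod_cast hθ
    simp only [skewSymbol, hθ', zero_mul, expMean_zero, greekSymbol, Finset.prod_range_succ,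
      Finset.prod_range_zero]
    push_cast
    ring
  · rw [Atil_eq_claimValue hp hσ ht, Atil_eq_claimValue hp hσ ht, claimValue_mul_exp_sub_div hp
      (((hz.pow 2).sub (.const hz.one_le_weight 1)).mul (hasPolyGrowth_bsFactor hσ R T)) ht hs hθ]
    refine claimValue_congr (fun z => ?_) s
    simp only [skewSymbol]
    push_cast
    ring

theorem Bfun_eq_claimValue (hp : IsRapidlyDecreasing R (pCoef l)) (hσ : 0 ≤ σ2)
    (ht : T - t ∈ Icc 0 T) {s : ℝ} (hs : 0 < s) :
    Bfun μ σ2 T R l t s =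
      claimValue R (pCoef l) (fun q => q.1 * skewSymbol μ σ2 q) (T - t) s := by
  have hgrowth := hasPolyGrowth_greekSymbol hσ R T
  have hz := hasPolyGrowth_fst (re ⁻¹' {R}) (Icc 0 T)
  rw [Bfun]
  split_ifs with hθ
  · simp only [cashGreek_eq_claimValue]
    rw [← claimValue_const_mul, ← claimValue_const_mul,
      ← claimValue_add hp (hgrowth 4) ((hgrowth 3).const_mul 6) ht,
      ← claimValue_add hp ((hgrowth 4).add ((hgrowth 3).const_mul 6)) ((hgrowth 2).const_mul 6) ht,
      ← claimValue_const_mul]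
    refine claimValue_congr (fun z => ?_) s
    have hθ' : (μ : ℂ) + σ2 / 2 = 0 := by exact_mod_cast hθ
    simp only [skewSymbol, hθ', zero_mul, expMean_zero, greekSymbol, Finset.prod_range_succ,
      Finset.prod_range_zero]
    push_cast
    ring
  · rw [Btil_eq_claimValue hp hσ ht, Btil_eq_claimValue hp hσ ht, claimValue_mul_exp_sub_div hp
      (((hz.pow 3).sub hz).mul (hasPolyGrowth_bsFactor hσ R T)) ht hs hθ]
    refine claimValue_congr (fun z => ?_) s
    simp only [skewSymbol]
    push_cast
    ring

theorem claimValue_correctionSymbol (hp : IsRapidlyDecreasing R (pCoef l)) (hσ : 0 ≤ σ2)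
    (ht : T - t ∈ Icc 0 T) {s : ℝ} (hs : 0 < s) :
    claimValue R (pCoef l) (correctionSymbol μ σ2) (T - t) s =
      σ2 / 2 * cashGreek σ2 T R l 2 t s + σ2 ^ 2 / 6 * Bfun μ σ2 T R l t s := by
  rw [cashGreek_two_eq_claimValue, Bfun_eq_claimValue hp hσ ht hs, ← claimValue_const_mul,
    ← claimValue_const_mul]
  exact claimValue_add hp ((hasPolyGrowth_gammaSymbol hσ R T).const_mul _)
    (((hasPolyGrowth_fst _ _).mul (hasPolyGrowth_skewSymbol hσ μ R T)).const_mul _) ht s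

end Greeks

/-! ### The second-order term -/

namespace TwoJet.IsGaussianAtZero

variable {μ σ2 T S₀ R : ℝ} {κ₃ κ₄ : ℂ} {k : TwoJet ℂ} {l : ℝ → ℝ} {p : ℝ → ℂ}

theorem capitalJet_val_zero (hk : k.IsGaussianAtZero μ σ2 κ₃ κ₄) :
    (k.capitalJet σ2 T S₀ R (pCoef l)).val (0, ()) = bsPrice σ2 T S₀ R l := by
  simp only [capitalJet, integral, comap, const, val_mul, hk.alphaJet_val_zero, bsPrice, bsFactor,
    bsExponent]

theorem capitalJet_deriv_zero (hk : k.IsGaussianAtZero μ σ2 κ₃ κ₄) :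
    (k.capitalJet σ2 T S₀ R p).deriv (0, ()) =
      κ₃ * claimValue R p (skewSymbol μ σ2) T S₀ := by
  rw [← claimValue_const_mul]
  refine integral_congr_ae (.of_forall fun y => ?_)
  simp only [comap, const, deriv_mul, zero_mul, zero_add, hk.alphaJet_deriv_zero]
  ring

theorem varianceIntegralJet_val_zero (hk : k.IsGaussianAtZero μ σ2 κ₃ κ₄) :
    (k.varianceIntegralJet σ2 T S₀ R p).val (0, ()) = 0 := by
  simp only [varianceIntegralJet, integral, comap, hk.varianceJet_val_zero, zero_mul,
    integral_zero]

theorem varianceIntegralJet_deriv_zero (hk : k.IsGaussianAtZero μ σ2 κ₃ κ₄) :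
    (k.varianceIntegralJet σ2 T S₀ R p).deriv (0, ()) = 0 := by
  simp only [varianceIntegralJet, integral, comap, hk.varianceJet_deriv_zero, zero_mul,
    integral_zero]

theorem varianceIntegralJet_deriv₂_zero (hk : k.IsGaussianAtZero μ σ2 κ₃ κ₄) (hσ : 0 < σ2)
    (hT : 0 ≤ T) (hS : 0 < S₀) (hp : IsRapidlyDecreasing R p) :
    (k.varianceIntegralJet σ2 T S₀ R p).deriv₂ (0, ()) =
      2 * ((3 * κ₄ - 9 * κ₃ ^ 2 / σ2) * (∫ t in (0 : ℝ)..T,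
          ∫ x, claimValue R p (gammaSymbol σ2) (T - t) (S₀ * Real.exp (μ * t + x)) ^ 2
            ∂gaussianReal 0 (Real.toNNReal (σ2 * t))) +
        36 * κ₃ ^ 2 / σ2 ^ 3 * (∫ t in (0 : ℝ)..T,
          ∫ x, claimValue R p (correctionSymbol μ σ2) (T - t) (S₀ * Real.exp (μ * t + x)) ^ 2
            ∂gaussianReal 0 (Real.toNNReal (σ2 * t)))) := by
  have hγ := hasPolyGrowth_gammaSymbol hσ.le R T
  have hη := hasPolyGrowth_correctionSymbol hσ.le μ R T
  have hkernel := hasPolyGrowth_gaussianKernel hσ.le μ S₀ R T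
  rw [← hp.integral_gaussianKernel_mul hσ.le hT hS hγ,
    ← hp.integral_gaussianKernel_mul hσ.le hT hS hη, ← integral_const_mul, ← integral_const_mul,
    ← integral_add, ← integral_const_mul]
  · refine integral_congr_ae (.of_forall fun x => ?_)
    simp only [comap, hk.varianceJet_deriv₂_zero, hk.kernelJet_deriv₂_zero hσ.ne', gaussianKernel,
      linePair]
    ring
  · exact (hp.integrable_linePair_mul (hkernel.mul hγ.mul_reversed)).const_mul _
  · exact (hp.integrable_linePair_mul (hkernel.mul hη.mul_reversed)).const_mul _

theorem errorJet_val_zero (hk : k.IsGaussianAtZero μ σ2 κ₃ κ₄) :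
    (k.errorJet σ2 T S₀ R l).val (0, ()) = 0 := by
  simp only [errorJet, val_add, val_mul, val_sub, const, hk.capitalJet_val_zero,
    hk.varianceIntegralJet_val_zero, sub_self, mul_zero, add_zero]

theorem errorJet_deriv_zero (hk : k.IsGaussianAtZero μ σ2 κ₃ κ₄) :
    (k.errorJet σ2 T S₀ R l).deriv (0, ()) = 0 := by
  simp only [errorJet, deriv_add, deriv_mul, val_sub, const, hk.capitalJet_val_zero,
    hk.varianceIntegralJet_deriv_zero, sub_self, zero_mul, mul_zero, add_zero]

theorem errorJet_deriv₂_zero (hk : k.IsGaussianAtZero μ σ2 κ₃ κ₄) (hσ : 0 < σ2)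
    (hT : 0 ≤ T) (hS : 0 < S₀) (hp : IsRapidlyDecreasing R (pCoef l)) :
    (k.errorJet σ2 T S₀ R l).deriv₂ (0, ()) =
      2 * ((3 * κ₄ - 9 * κ₃ ^ 2 / σ2) * (∫ t in (0 : ℝ)..T,
          ∫ x, cashGreek σ2 T R l 2 t (S₀ * Real.exp (μ * t + x)) ^ 2
            ∂gaussianReal 0 (Real.toNNReal (σ2 * t))) +
        κ₃ ^ 2 * Afun μ σ2 T R l 0 S₀ ^ 2 +
        36 * κ₃ ^ 2 / σ2 ^ 3 * (∫ t in (0 : ℝ)..T,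
          ∫ x, (σ2 / 2 * cashGreek σ2 T R l 2 t (S₀ * Real.exp (μ * t + x)) +
              σ2 ^ 2 / 6 * Bfun μ σ2 T R l t (S₀ * Real.exp (μ * t + x))) ^ 2
            ∂gaussianReal 0 (Real.toNNReal (σ2 * t)))) := by
  have hA : Afun μ σ2 T R l 0 S₀ = claimValue R (pCoef l) (skewSymbol μ σ2) T S₀ := by
    rw [Afun_eq_claimValue hp hσ.le ⟨by simpa, by simp⟩ hS, sub_zero]
  have hcorrection : (∫ t in (0 : ℝ)..T,
      ∫ x, (σ2 / 2 * cashGreek σ2 T R l 2 t (S₀ * Real.exp (μ * t + x)) +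
          σ2 ^ 2 / 6 * Bfun μ σ2 T R l t (S₀ * Real.exp (μ * t + x))) ^ 2
        ∂gaussianReal 0 (Real.toNNReal (σ2 * t))) =
      ∫ t in (0 : ℝ)..T, ∫ x, claimValue R (pCoef l) (correctionSymbol μ σ2) (T - t)
        (S₀ * Real.exp (μ * t + x)) ^ 2 ∂gaussianReal 0 (Real.toNNReal (σ2 * t)) := by
    refine intervalIntegral.integral_congr fun t ht => ?_
    rw [uIcc_of_le hT] at ht
    simp only [claimValue_correctionSymbol hp hσ.le (sub_mem_Icc_zero_iff_right.2 ht)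
      (mul_pos hS (Real.exp_pos _))]
  rw [hA, hcorrection]
  simp only [cashGreek_two_eq_claimValue, errorJet, deriv₂_add, deriv₂_mul,
    deriv_sub, val_sub, const, hk.capitalJet_val_zero, hk.capitalJet_deriv_zero,
    hk.varianceIntegralJet_deriv₂_zero hσ hT hS hp]
  ring

end TwoJet.IsGaussianAtZero

namespace TwoJet

section Smoothness

variable {Ω : Type*} [MeasurableSpace Ω] {U s : Set ℝ} {A : Set Ω} {ρ : Ω → ℝ} {F : TwoJet Ω}
  {w : Ω} {g : ℝ → ℂ} {x : ℝ}

theorem IsRegular.iteratedDerivWithin_one_eq (hF : F.IsRegular U A ρ) (hU : IsOpen U) (hw : w ∈ A)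
    (hg : EqOn g (fun x => F.val (x, w)) U) (hs : UniqueDiffOn ℝ s) (hsU : s ⊆ U) (hx : x ∈ s) :
    iteratedDerivWithin 1 g s x = F.deriv (x, w) := by
  have hderiv := (hF.hasDerivAt x (hsU hx) w hw).congr_of_eventuallyEq
    (hg.eventuallyEq_of_mem (hU.mem_nhds (hsU hx)))
  rw [iteratedDerivWithin_one, hderiv.hasDerivWithinAt.derivWithin (hs x hx)]

theorem IsRegular.iteratedDerivWithin_two_eq (hF : F.IsRegular U A ρ) (hU : IsOpen U) (hw : w ∈ A)
    (hg : EqOn g (fun x => F.val (x, w)) U) (hs : UniqueDiffOn ℝ s) (hsU : s ⊆ U) (hx : x ∈ s) :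
    iteratedDerivWithin 2 g s x = F.deriv₂ (x, w) := by
  have hsmooth := ((hF.contDiffOn hU hw).congr hg).contDiffAt (hU.mem_nhds (hsU hx))
  rw [iteratedDerivWithin_eq_iteratedDeriv hs hsmooth hx,
    (hg.eventuallyEq_of_mem (hU.mem_nhds (hsU hx))).iteratedDeriv_eq,
    hF.iteratedDeriv_two_eq hU hw (hsU hx)]

end Smoothness

variable {μ σ2 σ s₃ s₄ T S₀ R : ℝ} {k : TwoJet ℂ} {l : ℝ → ℝ}

theorem IsGaussianAtZero.half_mul_errorJet_deriv₂_zero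
    (hk : k.IsGaussianAtZero μ σ2 ((s₃ * σ ^ 3 : ℝ) / 6) ((s₄ * σ ^ 4 : ℝ) / 12))
    (hσ : 0 < σ) (hσ2 : σ ^ 2 = σ2) (hT : 0 ≤ T) (hS : 0 < S₀)
    (hp : IsRapidlyDecreasing R (pCoef l)) :
    (1 / 2 : ℂ) * (k.errorJet σ2 T S₀ R l).deriv₂ (0, ()) =
      (1 / 4 : ℂ) * (σ : ℂ) ^ 4 * ((s₄ : ℂ) - (s₃ : ℂ) ^ 2) *
        (∫ t in (0 : ℝ)..T,
          ∫ x : ℝ, (cashGreek σ2 T R l 2 t (S₀ * Real.exp (μ * t + x))) ^ 2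
            ∂(gaussianReal 0 (Real.toNNReal (σ2 * t)))) +
      (1 / 36 : ℂ) * (s₃ : ℂ) ^ 2 * (σ : ℂ) ^ 6 * (Afun μ σ2 T R l 0 S₀) ^ 2 +
      (s₃ : ℂ) ^ 2 *
        ∫ t in (0 : ℝ)..T,
          ∫ x : ℝ,
            ((1 / 2 : ℂ) * (σ : ℂ) ^ 2 *
                cashGreek σ2 T R l 2 t (S₀ * Real.exp (μ * t + x)) +
              (1 / 6 : ℂ) * (σ : ℂ) ^ 4 *
                Bfun μ σ2 T R l t (S₀ * Real.exp (μ * t + x))) ^ 2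
            ∂(gaussianReal 0 (Real.toNNReal (σ2 * t))) := by
  have hσ' : (σ : ℂ) ≠ 0 := ofReal_ne_zero.2 hσ.ne'
  have hσ2' : (σ2 : ℂ) = σ ^ 2 := by exact_mod_cast hσ2.symm
  have hγ : 3 * ((s₄ * σ ^ 4 : ℝ) / 12) - 9 * ((s₃ * σ ^ 3 : ℝ) / 6) ^ 2 / (σ2 : ℂ) =
      1 / 4 * σ ^ 4 * (s₄ - s₃ ^ 2) := by
    rw [hσ2']
    push_cast
    field_simp
    ring
  have hη : 36 * ((s₃ * σ ^ 3 : ℝ) / 6) ^ 2 / (σ2 : ℂ) ^ 3 = (s₃ : ℂ) ^ 2 := by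
    rw [hσ2']
    push_cast
    field_simp
    ring
  have hhalf : (1 / 2 : ℂ) * σ ^ 2 = σ2 / 2 := by rw [hσ2']; ring
  have hsixth : (1 / 6 : ℂ) * σ ^ 4 = σ2 ^ 2 / 6 := by rw [hσ2']; ring
  rw [hk.errorJet_deriv₂_zero (hσ2 ▸ pow_pos hσ 2) hT hS hp, hγ, hη]
  simp only [hhalf, hsixth]
  push_cast
  ring

end TwoJet

theorem exists_isExponent_kappa {c : ℝ} {K : Measure ℝ} {a b r r' : ℝ} (μ : ℝ) (hc : 0 ≤ c)
    (hK : ∫⁻ x : ℝ, ENNReal.ofReal (min 1 (x ^ 2)) ∂K ≠ ⊤)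
    (hexp : ∀ s ∈ Ioo a b,
      ∫⁻ x in {x : ℝ | 1 ≤ |x|}, ENNReal.ofReal (Real.exp (s * x)) ∂K ≠ ⊤)
    (h0 : 0 ∈ Ioo a b) (hr : r ∈ Ioo a b) (hr' : r' ∈ Ioo a b) :
    ∃ (m M : ℝ) (U : Set ℝ) (k : TwoJet ℂ), 0 ∈ Icc m M ∧ r ∈ Icc m M ∧ r' ∈ Icc m M ∧
      IsOpen U ∧ Icc 0 1 ⊆ U ∧ k.IsExponent U m M ∧
      k.IsGaussianAtZero μ (c + ∫ x : ℝ, x ^ 2 ∂K) ((∫ x : ℝ, x ^ 3 ∂K : ℝ) / 6)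
        ((∫ x : ℝ, x ^ 4 ∂K : ℝ) / 12) ∧
      ∀ l ∈ U, EqOn (kappa μ c K l) (fun z => k.val (l, z)) (re ⁻¹' Icc m M) := by
  have hm : min 0 (min r r') ≤ 0 := min_le_left _ _
  have hM : 0 ≤ max 0 (max r r') := le_max_left _ _
  obtain ⟨U, hU, hIU, hreg, hκ, hre⟩ := exists_isRegular_cumulantJet μ hc hK hexp
    (lt_min h0.1 (lt_min hr.1 hr'.1)) hm hM (max_lt h0.2 (max_lt hr.2 hr'.2))
  have hsub := Ioo_subset_integrableExpSet_sqMeasure hK hexp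
  have := isFiniteMeasure_of_zero_mem_integrableExpSet (hsub h0)
  have h0' := interior_maximal hsub isOpen_Ioo h0
  refine ⟨_, _, U, _, ⟨hm, hM⟩, ⟨by simp, by simp⟩, ⟨by simp, by simp⟩, hU, hIU, ⟨hreg, hre⟩,
    ⟨cumulantJet_val_zero μ hc h0', fun z => ?_, fun z => ?_⟩, hκ⟩
  · rw [cumulantJet_deriv_zero μ hc h0', mul_comm]
  · rw [cumulantJet_deriv₂_zero μ hc h0', mul_comm]

theorem contDiff_comp_exp_mul_exp {f : ℝ → ℝ} {n : WithTop ℕ∞} (hf : ContDiffOn ℝ n f (Ioi 0))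
    (R : ℝ) : ContDiff ℝ n fun x => f (Real.exp x) * Real.exp (-R * x) :=
  .mul (hf.comp_contDiff Real.contDiff_exp Real.exp_pos)
    (Real.contDiff_exp.comp (contDiff_const.mul contDiff_id))

/-- second-order expansion of the mean squared hedging error of the
Black-Scholes hedge applied to the Lévy model (Theorem `errBSapprox`). -/
theorem black_scholes_hedge_error_expansion
    (μ c : ℝ) (hc : 0 ≤ c) (K : MeasureTheory.Measure ℝ)
    (hK0 : K {0} = 0)
    (hKmin : ∫⁻ x : ℝ, ENNReal.ofReal (min 1 (x ^ 2)) ∂K ≠ ⊤)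
    (R : ℝ) (hR : R ≠ 0) (a b : ℝ)
    (h0 : (0 : ℝ) ∈ Set.Ioo a b) (h2 : (2 : ℝ) ∈ Set.Ioo a b)
    (h2R : 2 * R ∈ Set.Ioo a b)
    (hK5 : ∫⁻ x in {x : ℝ | 1 ≤ |x|}, ENNReal.ofReal (|x| ^ 5) ∂K ≠ ⊤)
    (hKexp : ∀ s ∈ Set.Ioo a b,
      ∫⁻ x in {x : ℝ | 1 ≤ |x|}, ENNReal.ofReal (Real.exp (s * x)) ∂K ≠ ⊤)
    (σ2 : ℝ) (hσ2 : σ2 = c + ∫ x : ℝ, x ^ 2 ∂K) (hσ2pos : 0 < σ2)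
    (σ m s3 s4 : ℝ) (hσ : σ = Real.sqrt σ2) (hm : m = (μ + σ2 / 2) / σ2)
    (hs3 : s3 = (∫ x : ℝ, x ^ 3 ∂K) / σ ^ 3) (hs4 : s4 = (∫ x : ℝ, x ^ 4 ∂K) / σ ^ 4)
    (f : ℝ → ℝ) (hf : ContDiffOn ℝ (⊤ : ℕ∞) f (Set.Ioi 0))
    (l : ℝ → ℝ) (hl : l = fun x => f (Real.exp x) * Real.exp (-R * x))
    (hlint : ∀ n : ℕ, Integrable (iteratedDeriv n l))
    (T S₀ : ℝ) (hT : 0 < T) (hS₀ : 0 < S₀)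
    (alpha : ℝ → ℂ → ℝ → ℂ)
    (halpha : ∀ (lam : ℝ) (z : ℂ) (t : ℝ), alpha lam z t =
      (1 - kappa μ c K lam 1 *
          ∫ u in t..T, z * Complex.exp (kappa μ c K lam z * ((u : ℂ) - (T : ℂ))) *
            Complex.exp (((σ2 : ℝ) : ℂ) / 2 * z * (z - 1) * ((T : ℂ) - (u : ℂ)))) *
        Complex.exp (kappa μ c K lam z * ((T : ℂ) - (t : ℂ))))
    (w : ℝ → ℂ)
    (hw : ∀ lam : ℝ, w lam =
      ∫ y : ℝ, cpowR S₀ (zLine R y) * alpha lam (zLine R y) 0 * pCoef l y)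
    (cBS : ℂ)
    (hcBS : cBS = ∫ y : ℝ, cpowR S₀ (zLine R y) *
      Complex.exp (((σ2 : ℝ) : ℂ) / 2 * zLine R y * (zLine R y - 1) * (T : ℂ)) * pCoef l y)
    (h : ℝ → ℝ → ℂ → ℂ → ℂ)
    (hh : ∀ (lam t : ℝ) (y z : ℂ), h lam t y z =
      kbar μ c K lam y z * alpha lam y t * alpha lam z t -
        kbar μ c K lam y 1 * alpha lam y t * z *
          Complex.exp (((σ2 : ℝ) : ℂ) / 2 * z * (z - 1) * ((T : ℂ) - (t : ℂ))) -
        kbar μ c K lam z 1 * alpha lam z t * y *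
          Complex.exp (((σ2 : ℝ) : ℂ) / 2 * y * (y - 1) * ((T : ℂ) - (t : ℂ))) +
        kbar μ c K lam 1 1 * y * z *
          Complex.exp (((σ2 : ℝ) : ℂ) / 2 * (z * (z - 1) + y * (y - 1)) *
            ((T : ℂ) - (t : ℂ))))
    (eps2 : ℝ → ℂ)
    (heps2 : ∀ lam : ℝ, eps2 lam =
      (w lam - cBS) ^ 2 +
        ∫ u : ℝ, ∫ v : ℝ, ∫ t in (0 : ℝ)..T,
          cpowR S₀ (zLine R u + zLine R v) *
            Complex.exp (kappa μ c K lam (zLine R u + zLine R v) * (t : ℂ)) *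
            h lam t (zLine R u) (zLine R v) * pCoef l u * pCoef l v) :
    ContDiffOn ℝ 2 eps2 (Set.Icc 0 1) ∧
    eps2 0 = 0 ∧
    iteratedDerivWithin 1 eps2 (Set.Icc 0 1) 0 = 0 ∧
    (1 / 2 : ℂ) * iteratedDerivWithin 2 eps2 (Set.Icc 0 1) 0 =
      (1 / 4 : ℂ) * (σ : ℂ) ^ 4 * ((s4 : ℂ) - (s3 : ℂ) ^ 2) *
        (∫ t in (0 : ℝ)..T,
          ∫ x : ℝ, (cashGreek σ2 T R l 2 t (S₀ * Real.exp (μ * t + x))) ^ 2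
            ∂(gaussianReal 0 (Real.toNNReal (σ2 * t)))) +
      (1 / 36 : ℂ) * (s3 : ℂ) ^ 2 * (σ : ℂ) ^ 6 * (Afun μ σ2 T R l 0 S₀) ^ 2 +
      (s3 : ℂ) ^ 2 *
        ∫ t in (0 : ℝ)..T,
          ∫ x : ℝ,
            ((1 / 2 : ℂ) * (σ : ℂ) ^ 2 *
                cashGreek σ2 T R l 2 t (S₀ * Real.exp (μ * t + x)) +
              (1 / 6 : ℂ) * (σ : ℂ) ^ 4 *
                Bfun μ σ2 T R l t (S₀ * Real.exp (μ * t + x))) ^ 2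
            ∂(gaussianReal 0 (Real.toNNReal (σ2 * t))) := by
  have hp : IsRapidlyDecreasing R (pCoef l) :=
    isRapidlyDecreasing_pCoef (hl ▸ contDiff_comp_exp_mul_exp hf R) hlint R
  have hσpos : 0 < σ := hσ ▸ Real.sqrt_pos.2 hσ2pos
  have hσsq : σ ^ 2 = σ2 := hσ ▸ Real.sq_sqrt hσ2pos.le
  obtain ⟨_, _, U, k, hmem0, hmem2, hmem2R, hU, hIU, hk, hk0, hκ⟩ :=
    exists_isExponent_kappa μ hc hKmin hKexp h0 h2 h2R
  rw [← hσ2, ← (eq_div_iff (pow_pos hσpos 3).ne').1 hs3,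
    ← (eq_div_iff (pow_pos hσpos 4).ne').1 hs4] at hk0
  have hreg := hk.errorJet hU hmem0 hmem2 hmem2R hσ2pos.le hT.le S₀ hp
  have heps : EqOn eps2 (fun x => (k.errorJet σ2 T S₀ R l).val (x, ())) U := fun x hx => by
    simp only [heps2, hw, hcBS, hh, halpha]
    exact hk.eqOn_hedgeError hU hmem0 hmem2 hmem2R hσ2pos.le hT.le S₀ hp hκ hx
  have h01 : (0 : ℝ) ∈ Icc 0 1 := ⟨le_rfl, zero_le_one⟩
  have hunique : UniqueDiffOn ℝ (Icc (0 : ℝ) 1) := uniqueDiffOn_Icc zero_lt_one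
  refine ⟨((hreg.contDiffOn hU trivial).congr heps).mono hIU,
    (heps (hIU h01)).trans hk0.errorJet_val_zero, ?_, ?_⟩
  · rw [hreg.iteratedDerivWithin_one_eq hU trivial heps hunique hIU h01, hk0.errorJet_deriv_zero]
  · rw [hreg.iteratedDerivWithin_two_eq hU trivial heps hunique hIU h01,
      hk0.half_mul_errorJet_deriv₂_zero hσpos hσsq hT.le hS₀ hp]
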